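/- arXiv:2011.05006 — 3 statements merged into one kernel-verified Lean document; each statement's English description precedes it below -/
import Mathlib

section
/- For all real numbers q, z with 0 < q < 1 and z > 0, one has 4·S_odd(q,2)·Σ_{ℓ∈ℤ} q^{(ℓ+1)²} z^{2ℓ+1} = Π_{i≥1} ((1 + q^{i}z)(1 + q^{i−1}z⁻¹))² − Π_{i≥1} ((1 − q^{i}z)(1 − q^{i−1}z⁻¹))², where the sum over ℓ and the infinite products converge absolutely. -/
/-!
Let `G(x) = ∏_{i ≥ 0} (1 + q^i x)^2 = ∑ c_n x^n` (`pairSeries_eq_tprod`). The functional equation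
`G(x) = (1 + x)^2 G(q x)` amounts to a three-term recurrence for the `c_n`, and both sides of the
theorem are limits of quantities governed by it.

*The sum over `Ho`.* `Ho` is the increasing union of the sets `levelPos (2 * k)` of sequences that
are in the ground state after index `2 * k` and non-zero at `2 * k`. Adding one entry at a time, and
recording only whether the last entry vanishes, yields a `2 × 2` transfer-matrix recursion for the
partial sums, and this recursion is the recurrence of the `c_n`. The sum over `levelPos (2 * k)` is
`β_k = q^(-k^2) c_(2k+1) / 2` (`level_hasSum`), so `β_k → Sodd q 2` (`oddLevel_tendsto_Sodd`).

*The products.* Evaluating `G` at `q^(-K) z⁻¹` and rescaling gives the double product in which the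
factors `(1 + q^j z)^2` are cut off at `j = K` (`pairSeries_shift`). Its coefficient at `z^(2ℓ+1)` is
`2 β_(K-1-ℓ) q^((ℓ+1)^2)`, and subtracting the value at `-z` doubles the odd part
(`shift_odd_hasSum`). The `β_k` are bounded, because each is, up to a constant, one term of the
positive series for a truncation at `z = 1` (`oddLevel_bdd`); this also gives the summability over
`Ho`. Dominated convergence as `K → ∞` finishes the proof (`theta_identity`).
-/

open scoped BigOperators

/-- `He` is the set of sequences `(ω_{-i})_{i ≥ 1}` of non-negative integers (indexed here by
`n : ℕ` with `i = n + 1`) with no two consecutive vanishing entries, agreeing for large `i`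
with the sequence which is `1` at even `i` and `0` at odd `i`. -/
def He : Set (ℕ → ℕ) :=
  {ω | (∀ n : ℕ, ¬(ω n = 0 ∧ ω (n + 1) = 0)) ∧
       (∃ N : ℕ, ∀ n ≥ N, ω n = if (n + 1) % 2 = 0 then 1 else 0)}

/-- `Ho` is as `He`, but agreeing for large `i` with the sequence which is `1` at odd `i`
and `0` at even `i`. -/
def Ho : Set (ℕ → ℕ) :=
  {ω | (∀ n : ℕ, ¬(ω n = 0 ∧ ω (n + 1) = 0)) ∧
       (∃ N : ℕ, ∀ n ≥ N, ω n = if (n + 1) % 2 = 1 then 1 else 0)}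

/-- `A(ω) = Σ_{i odd} i·ω_{-i} + Σ_{i even} i·(ω_{-i} − 1)`. -/
noncomputable def Afun (ω : ℕ → ℕ) : ℤ :=
  ∑ᶠ n : ℕ, (if (n + 1) % 2 = 1 then ((n : ℤ) + 1) * (ω n : ℤ)
             else ((n : ℤ) + 1) * ((ω n : ℤ) - 1))

/-- `B(ω) = 2·(Σ_{i odd} 1{ω_{-i} ≥ 1} − Σ_{i even} 1{ω_{-i} = 0})`. -/
noncomputable def Bfun (ω : ℕ → ℕ) : ℤ :=
  2 * ((∑ᶠ n : ℕ, if (n + 1) % 2 = 1 ∧ 1 ≤ ω n then (1 : ℤ) else 0)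
     - (∑ᶠ n : ℕ, if (n + 1) % 2 = 0 ∧ ω n = 0 then (1 : ℤ) else 0))

/-- `A'(ω) = Σ_{i even} i·ω_{-i} + Σ_{i odd} i·(ω_{-i} − 1)`. -/
noncomputable def A'fun (ω : ℕ → ℕ) : ℤ :=
  ∑ᶠ n : ℕ, (if (n + 1) % 2 = 0 then ((n : ℤ) + 1) * (ω n : ℤ)
             else ((n : ℤ) + 1) * ((ω n : ℤ) - 1))

/-- `B'(ω) = 2·(Σ_{i even} 1{ω_{-i} ≥ 1} − Σ_{i odd} 1{ω_{-i} = 0})`. -/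
noncomputable def B'fun (ω : ℕ → ℕ) : ℤ :=
  2 * ((∑ᶠ n : ℕ, if (n + 1) % 2 = 0 ∧ 1 ≤ ω n then (1 : ℤ) else 0)
     - (∑ᶠ n : ℕ, if (n + 1) % 2 = 1 ∧ ω n = 0 then (1 : ℤ) else 0))

/-- `S_even(q̃, t) = Σ_{ω ∈ H_e} q̃^{A(ω)} t^{B(ω)}`. -/
noncomputable def Seven (q t : ℝ) : ℝ := ∑' ω : He, q ^ Afun ω.1 * t ^ Bfun ω.1

/-- `S_odd(q̃, t) = Σ_{ω ∈ H_o} q̃^{A'(ω)} t^{B'(ω)}`. -/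
noncomputable def Sodd (q t : ℝ) : ℝ := ∑' ω : Ho, q ^ A'fun ω.1 * t ^ B'fun ω.1

open Filter Topology

/-! ### The square of Euler's product and its coefficients -/

/-- The coefficients of `∏_{i ≥ 0} (1 + q^i x)^2 = ∑ c_n x^n`, defined through the recurrence
`(1 - q^n) c_n = 2 q^(n-1) c_(n-1) + q^(n-2) c_(n-2)` that the functional equation
`G(x) = (1 + x)^2 G(q x)` imposes. -/
noncomputable def pairCoeff (q : ℝ) : ℕ → ℝ
  | 0 => 1
  | 1 => 2 / (1 - q)
  | n + 2 => (2 * q ^ (n + 1) * pairCoeff q (n + 1) + q ^ n * pairCoeff q n) / (1 - q ^ (n + 2))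

/-- The entire function `G(x) = ∑ c_n x^n`. -/
noncomputable def pairSeries (q x : ℝ) : ℝ := ∑' n, pairCoeff q n * x ^ n

/-- The normalized odd coefficients `q^(-k^2) c_(2k+1) / 2`. They are at once the partial sums of
`Sodd q 2` over the sets `levelPos (2 * k)` and, after a shift of `x` by `q^(-K)`, the odd Laurent
coefficients of the truncated double product. -/
noncomputable def oddLevel (q : ℝ) (k : ℕ) : ℝ := (q⁻¹) ^ (k ^ 2) * pairCoeff q (2 * k + 1) / 2

section Analytic

variable {q : ℝ}

lemma one_sub_pow_pos (hq0 : 0 < q) (hq1 : q < 1) (n : ℕ) : 0 < 1 - q ^ (n + 1) :=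
  sub_pos.2 (pow_lt_one₀ hq0.le hq1 (Nat.succ_ne_zero n))

lemma pairCoeff_pos (hq0 : 0 < q) (hq1 : q < 1) (n : ℕ) : 0 < pairCoeff q n := by
  induction n using Nat.strong_induction_on with
  | _ n ih =>
    match n with
    | 0 => simp [pairCoeff]
    | 1 => rw [pairCoeff]; have : 0 < 1 - q := by linarith
           positivity
    | n + 2 =>
      rw [pairCoeff]
      have h1 := ih (n + 1) (by omega)
      have h2 := ih n (by omega)
      have h3 := one_sub_pow_pos hq0 hq1 (n + 1)
      positivity

lemma pairCoeff_one (hq1 : q < 1) : (1 - q) * pairCoeff q 1 = 2 := by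
  have : 1 - q ≠ 0 := by linarith
  rw [pairCoeff]; field_simp

lemma pairCoeff_rec (hq0 : 0 < q) (hq1 : q < 1) (n : ℕ) :
    (1 - q ^ (n + 2)) * pairCoeff q (n + 2)
      = 2 * q ^ (n + 1) * pairCoeff q (n + 1) + q ^ n * pairCoeff q n := by
  have := (one_sub_pow_pos hq0 hq1 (n + 1)).ne'
  rw [pairCoeff]; field_simp

lemma pairSeries_summable_of_pos (hq0 : 0 < q) (hq1 : q < 1) {x : ℝ} (hx : 0 < x) :
    Summable fun n => pairCoeff q n * x ^ n := by
  set u : ℕ → ℝ := fun n => pairCoeff q n * x ^ n with hu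
  have hupos : ∀ n, 0 < u n := fun n => by
    have := pairCoeff_pos hq0 hq1 n
    positivity
  have h1q : 0 < 1 - q := by linarith
  have hlim : Tendsto (fun n => q ^ n * ((2 * x + x ^ 2) / (1 - q))) atTop (𝓝 0) := by
    simpa using (tendsto_pow_atTop_nhds_zero_of_lt_one hq0.le hq1).mul_const
      ((2 * x + x ^ 2) / (1 - q))
  have hstep : ∀ᶠ n in atTop, u (n + 2) ≤ 1 / 4 * (u (n + 1) + u n) := by
    filter_upwards [hlim.eventually_lt_const (show (0 : ℝ) < 1 / 4 by norm_num)] with n hn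
    have hc0 := pairCoeff_pos hq0 hq1 n
    have hc1 := pairCoeff_pos hq0 hq1 (n + 1)
    have hc2 := pairCoeff_pos hq0 hq1 (n + 2)
    have hrec := pairCoeff_rec hq0 hq1 n
    have hq2 : q ^ (n + 2) ≤ q := pow_le_of_le_one hq0.le hq1.le (by omega)
    have hqn : 0 < q ^ n := by positivity
    have hq1n : q ^ (n + 1) ≤ q ^ n := pow_le_pow_of_le_one hq0.le hq1.le (by omega)
    have hu0 := hupos n
    have hu1 := hupos (n + 1)
    have hn' : q ^ n * (2 * x + x ^ 2) < 1 / 4 * (1 - q) := by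
      rw [← mul_div_assoc, div_lt_iff₀ h1q] at hn; exact hn
    have e : (1 - q ^ (n + 2)) * u (n + 2)
        = 2 * q ^ (n + 1) * x * u (n + 1) + q ^ n * x ^ 2 * u n := by
      simp only [hu]
      rw [← mul_assoc, hrec]; ring
    have h2 : (1 - q) * u (n + 2) ≤ (1 - q ^ (n + 2)) * u (n + 2) := by
      have := hupos (n + 2)
      gcongr
    have h3 : 2 * q ^ (n + 1) * x * u (n + 1) ≤ 1 / 4 * (1 - q) * u (n + 1) := by
      refine mul_le_mul_of_nonneg_right ?_ hu1.le
      nlinarith [mul_pos hqn (pow_pos hx 2)]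
    have h4 : q ^ n * x ^ 2 * u n ≤ 1 / 4 * (1 - q) * u n := by
      refine mul_le_mul_of_nonneg_right ?_ hu0.le
      nlinarith [mul_pos hqn hx]
    have h5 : (1 - q) * u (n + 2) ≤ (1 - q) * (1 / 4 * (u (n + 1) + u n)) := by linarith
    exact le_of_mul_le_mul_left h5 h1q
  -- the combination `u n + 2 * u (n + 1)` contracts by the factor `3/4`, which `u` need not do
  have hv : Summable fun n => u n + 2 * u (n + 1) := by
    refine summable_of_ratio_norm_eventually_le (r := 3 / 4) (by norm_num) ?_
    filter_upwards [hstep] with n hn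
    have h0 := hupos n
    have h1 := hupos (n + 1)
    have h2 := hupos (n + 2)
    rw [Real.norm_of_nonneg (by positivity), Real.norm_of_nonneg (by positivity)]
    show u (n + 1) + 2 * u (n + 2) ≤ _
    linarith
  refine Summable.of_nonneg_of_le (fun n => (hupos n).le) (fun n => ?_) hv
  have := hupos (n + 1)
  linarith

lemma pairSeries_summable_abs (hq0 : 0 < q) (hq1 : q < 1) (x : ℝ) :
    Summable fun n => pairCoeff q n * |x| ^ n := by
  have h := pairSeries_summable_of_pos hq0 hq1 (x := |x| + 1) (by positivity)
  refine Summable.of_nonneg_of_le (fun n => ?_) (fun n => ?_) h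
  · have := pairCoeff_pos hq0 hq1 n
    positivity
  · have := pairCoeff_pos hq0 hq1 n
    gcongr
    linarith

lemma pairSeries_hasSum (hq0 : 0 < q) (hq1 : q < 1) (x : ℝ) :
    HasSum (fun n => pairCoeff q n * x ^ n) (pairSeries q x) := by
  refine (Summable.of_norm ?_).hasSum
  refine (pairSeries_summable_abs hq0 hq1 x).congr fun n => ?_
  rw [norm_mul, norm_pow, Real.norm_of_nonneg (pairCoeff_pos hq0 hq1 n).le, Real.norm_eq_abs]

/-- The coefficient recurrence in functional form. -/
lemma pairSeries_functional (hq0 : 0 < q) (hq1 : q < 1) (x : ℝ) :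
    pairSeries q x = (1 + x) ^ 2 * pairSeries q (q * x) := by
  have h1 := pairSeries_hasSum hq0 hq1 x
  have h2 := pairSeries_hasSum hq0 hq1 (q * x)
  have hd := (hasSum_nat_add_iff' 2).2 (h1.sub h2)
  have ha := ((hasSum_nat_add_iff' 1).2 h2).mul_left (2 * x)
  have hb := h2.mul_left (x ^ 2)
  have he := hd.unique ((ha.add hb).congr_fun fun n => ?_)
  · simp [Finset.sum_range_succ] at he
    have := pairCoeff_one hq1
    have h0 : pairCoeff q 0 = 1 := by rw [pairCoeff]
    rw [h0] at he
    linear_combination he + x * this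
  · have := pairCoeff_rec hq0 hq1 n
    simp only [mul_pow]
    linear_combination x ^ (n + 2) * this

lemma pairSeries_tendsto (hq0 : 0 < q) (hq1 : q < 1) (x : ℝ) :
    Tendsto (fun n : ℕ => pairSeries q (q ^ n * x)) atTop (𝓝 1) := by
  have h := tendsto_tsum_of_dominated_convergence (𝓕 := atTop)
    (f := fun (n : ℕ) (m : ℕ) => pairCoeff q m * (q ^ n * x) ^ m)
    (g := fun m => if m = 0 then (1 : ℝ) else 0) (pairSeries_summable_abs hq0 hq1 x) ?_ ?_
  · simpa [pairSeries] using h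
  · intro m
    rcases eq_or_ne m 0 with rfl | hm
    · simp [pairCoeff]
    · have : Tendsto (fun n : ℕ => pairCoeff q m * (q ^ n * x) ^ m) atTop
          (𝓝 (pairCoeff q m * (0 * x) ^ m)) :=
        (((tendsto_pow_atTop_nhds_zero_of_lt_one hq0.le hq1).mul_const x).pow m).const_mul _
      simpa [hm] using this
  · refine Eventually.of_forall fun n m => ?_
    have := pairCoeff_pos hq0 hq1 m
    rw [norm_mul, norm_pow, Real.norm_of_nonneg this.le, norm_mul, Real.norm_eq_abs x,
      Real.norm_of_nonneg (by positivity)]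
    gcongr
    exact mul_le_of_le_one_left (abs_nonneg x) (pow_le_one₀ hq0.le hq1.le)

lemma pairSeries_prod_range (hq0 : 0 < q) (hq1 : q < 1) (x : ℝ) (n : ℕ) :
    pairSeries q x = (∏ i ∈ Finset.range n, (1 + q ^ i * x) ^ 2) * pairSeries q (q ^ n * x) := by
  induction n with
  | zero => simp
  | succ n ih =>
    rw [ih, Finset.prod_range_succ, pairSeries_functional hq0 hq1 (q ^ n * x)]
    ring_nf

lemma multipliable_factor (hq0 : 0 < q) (hq1 : q < 1) (x : ℝ) :
    Multipliable fun i : ℕ => (1 + q ^ i * x) ^ 2 :=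
  (Real.multipliable_one_add_of_summable
    ((summable_geometric_of_lt_one hq0.le hq1).mul_right x)).pow 2

/-- Iterating the functional equation and using `G(0) = 1` gives the product formula. -/
lemma pairSeries_eq_tprod (hq0 : 0 < q) (hq1 : q < 1) (x : ℝ) :
    pairSeries q x = ∏' i : ℕ, (1 + q ^ i * x) ^ 2 := by
  have h := (multipliable_factor hq0 hq1 x).hasProd.tendsto_prod_nat.mul
    (pairSeries_tendsto hq0 hq1 x)
  simp_rw [← pairSeries_prod_range hq0 hq1 x, mul_one] at h
  exact tendsto_nhds_unique tendsto_const_nhds h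

/-- The factors of `G(q^(-K) z⁻¹)` with negative powers of `q` turn, after extracting `q^(-j) z⁻¹`
from each, into the first `K` factors `(1 + q^j z)^2`. -/
lemma pairSeries_shift (hq0 : 0 < q) (hq1 : q < 1) {z : ℝ} (hz : z ≠ 0) (K : ℕ) :
    q ^ (K * (K + 1)) * z ^ (2 * K) * pairSeries q ((q⁻¹) ^ K * z⁻¹)
      = pairSeries q z⁻¹ * ∏ i ∈ Finset.range K, (1 + q ^ (i + 1) * z) ^ 2 := by
  induction K with
  | zero => simp
  | succ K ih =>
    rw [Finset.prod_range_succ, ← mul_assoc, ← ih,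
      pairSeries_functional hq0 hq1 ((q⁻¹) ^ (K + 1) * z⁻¹)]
    have e1 : q * ((q⁻¹) ^ (K + 1) * z⁻¹) = (q⁻¹) ^ K * z⁻¹ := by
      rw [pow_succ]; field_simp
    have e2 : (1 + q ^ (K + 1) * z) = q ^ (K + 1) * z * (1 + (q⁻¹) ^ (K + 1) * z⁻¹) := by
      rw [inv_pow]; field_simp; ring
    rw [e1, e2]
    ring

/-- The double product is the limit of the expressions in `pairSeries_shift`. -/
lemma tendsto_shift (hq0 : 0 < q) (hq1 : q < 1) (z : ℝ) :
    Multipliable (fun i : ℕ => ((1 + q ^ (i + 1) * z) * (1 + q ^ i * z⁻¹)) ^ 2) ∧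
    Tendsto (fun K => pairSeries q z⁻¹ * ∏ i ∈ Finset.range K, (1 + q ^ (i + 1) * z) ^ 2) atTop
      (𝓝 (∏' i : ℕ, ((1 + q ^ (i + 1) * z) * (1 + q ^ i * z⁻¹)) ^ 2)) := by
  have h1 : Multipliable fun i : ℕ => (1 + q ^ (i + 1) * z) ^ 2 := by
    refine (multipliable_factor hq0 hq1 (q * z)).congr fun i => ?_
    rw [pow_succ]; ring
  have h2 := multipliable_factor hq0 hq1 z⁻¹
  simp_rw [mul_pow]
  refine ⟨h1.mul h2, ?_⟩
  rw [h1.tprod_mul h2, ← pairSeries_eq_tprod hq0 hq1, mul_comm]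
  exact h1.hasProd.tendsto_prod_nat.const_mul _

lemma oddLevel_pos (hq0 : 0 < q) (hq1 : q < 1) (k : ℕ) : 0 < oddLevel q k := by
  have := pairCoeff_pos hq0 hq1 (2 * k + 1)
  unfold oddLevel
  positivity

/-- Up to the factor `2 * q`, `oddLevel q k` is a single term of the positive series for the
`(k+1)`-st truncation of the double product at `z = 1`, and these truncations are bounded. -/
lemma oddLevel_bdd (hq0 : 0 < q) (hq1 : q < 1) : ∃ C, ∀ k, oddLevel q k ≤ C := by
  obtain ⟨C, hC⟩ := (tendsto_shift hq0 hq1 1).2.bddAbove_range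
  refine ⟨q⁻¹ * C / 2, fun k => ?_⟩
  have h1 : _ ≤ C := hC ⟨k + 1, rfl⟩
  simp only at h1
  rw [← pairSeries_shift hq0 hq1 one_ne_zero] at h1
  simp only [one_pow, inv_one, mul_one] at h1
  have h2 := le_hasSum (pairSeries_hasSum hq0 hq1 ((q⁻¹) ^ (k + 1))) (2 * k + 1) fun n _ => by
    have := pairCoeff_pos hq0 hq1 n
    positivity
  have h3 := (mul_le_mul_of_nonneg_left h2
    (show 0 ≤ q ^ ((k + 1) * (k + 1 + 1)) by positivity)).trans h1
  have e : q ^ ((k + 1) * (k + 1 + 1)) * (pairCoeff q (2 * k + 1) * (q⁻¹ ^ (k + 1)) ^ (2 * k + 1))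
      = q * (2 * oddLevel q k) := by
    unfold oddLevel
    have : q ^ ((k + 1) * (k + 1 + 1)) * q ^ (k ^ 2) = q * q ^ ((k + 1) * (2 * k + 1)) := by
      rw [← pow_add, ← pow_succ']; congr 1; ring
    rw [← pow_mul, inv_pow, inv_pow]
    field_simp
    linear_combination this
  rw [e] at h3
  rw [inv_mul_eq_div, le_div_iff₀ two_pos, le_div_iff₀ hq0]
  linarith

/-! ### The theta series and the odd part of the double product -/

/-- The `ℓ`-th term of the theta series on the left-hand side. -/
noncomputable def thetaTerm (q z : ℝ) (ℓ : ℤ) : ℝ := q ^ ((ℓ + 1) ^ 2) * z ^ (2 * ℓ + 1)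

lemma summable_of_ratio {f r : ℕ → ℝ} (hf : ∀ n, f n ≠ 0) (hr : ∀ n, f (n + 1) = r n * f n)
    (h : Tendsto r atTop (𝓝 0)) : Summable f := by
  refine summable_of_ratio_test_tendsto_lt_one zero_lt_one (Eventually.of_forall hf) ?_
  have : (fun n => ‖f (n + 1)‖ / ‖f n‖) = fun n => ‖r n‖ := by
    funext n
    have := norm_ne_zero_iff.2 (hf n)
    rw [hr, norm_mul]; field_simp
  rw [this]
  simpa using h.norm

lemma thetaTerm_summable (hq0 : 0 < q) (hq1 : q < 1) {z : ℝ} (hz : 0 < z) :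
    Summable (thetaTerm q z) := by
  have hpos : ∀ ℓ, thetaTerm q z ℓ ≠ 0 := fun ℓ => by unfold thetaTerm; positivity
  have hlim : ∀ C : ℝ, Tendsto (fun n : ℕ => (q ^ 2) ^ n * C) atTop (𝓝 0) := fun C => by
    simpa using (tendsto_pow_atTop_nhds_zero_of_lt_one (by positivity : 0 ≤ q ^ 2)
      (pow_lt_one₀ hq0.le hq1 two_ne_zero)).mul_const C
  refine Summable.of_nat_of_neg
    (summable_of_ratio (fun n => hpos _) (fun n => ?_) (hlim (q ^ 3 * z ^ 2)))
    (summable_of_ratio (fun n => hpos _) (fun n => ?_) (hlim (q⁻¹ * (z ^ 2)⁻¹)))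
  · unfold thetaTerm
    have e1 : ((((n + 1 : ℕ) : ℤ) + 1) ^ 2 : ℤ) = ((n : ℤ) + 1) ^ 2 + ((2 * n + 3 : ℕ) : ℤ) := by
      push_cast; ring
    have e2 : (2 * ((n + 1 : ℕ) : ℤ) + 1) = 2 * (n : ℤ) + 1 + ((2 : ℕ) : ℤ) := by push_cast; ring
    rw [e1, e2, zpow_add₀ hq0.ne', zpow_add₀ hz.ne', zpow_natCast, zpow_natCast]
    ring
  · unfold thetaTerm
    have e1 : ((-((n + 1 : ℕ) : ℤ) + 1) ^ 2 : ℤ) = (-(n : ℤ) + 1) ^ 2 + ((2 * n : ℕ) : ℤ) + -1 := by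
      push_cast; ring
    have e2 : (2 * -((n + 1 : ℕ) : ℤ) + 1) = 2 * -(n : ℤ) + 1 + -((2 : ℕ) : ℤ) := by
      push_cast; ring
    rw [e1, e2, zpow_add₀ hq0.ne', zpow_add₀ hq0.ne', zpow_add₀ hz.ne', zpow_neg z, zpow_natCast,
      zpow_natCast, zpow_neg_one]
    ring

/-- Laurent expansion of twice the odd part in `z` of the truncated double product. The coefficient
`c_(2m+1)` contributes to the power `z^(2ℓ+1)` with `ℓ = K - 1 - m`. -/
lemma shift_odd_hasSum (hq0 : 0 < q) (hq1 : q < 1) {z : ℝ} (hz : 0 < z) (K : ℕ) :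
    HasSum (fun ℓ : ℤ =>
        if ℓ < K then 4 * oddLevel q (K - 1 - ℓ).toNat * thetaTerm q z ℓ else 0)
      (pairSeries q z⁻¹ * ∏ i ∈ Finset.range K, (1 + q ^ (i + 1) * z) ^ 2
        - pairSeries q (-z)⁻¹ * ∏ i ∈ Finset.range K, (1 + q ^ (i + 1) * (-z)) ^ 2) := by
  rw [← pairSeries_shift hq0 hq1 hz.ne', ← pairSeries_shift hq0 hq1 (neg_ne_zero.2 hz.ne'),
    Even.neg_pow (even_two_mul K), ← mul_sub, inv_neg, mul_neg]
  set x := (q⁻¹) ^ K * z⁻¹ with hx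
  have h := ((pairSeries_hasSum hq0 hq1 x).sub (pairSeries_hasSum hq0 hq1 (-x))).mul_left
    (q ^ (K * (K + 1)) * z ^ (2 * K))
  have hinj : Function.Injective (fun m : ℕ => 2 * m + 1) := fun a b h => by simpa using h
  rw [← hinj.hasSum_iff ?_] at h
  · have hinj' : Function.Injective (fun m : ℕ => (K : ℤ) - 1 - m) := fun a b h => by
      simpa using h
    rw [← hinj'.hasSum_iff ?_]
    · refine h.congr_fun fun m => ?_
      have hlt : (K : ℤ) - 1 - m < K := by omega
      have ht : ((K : ℤ) - 1 - (K - 1 - m)).toNat = m := by omega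
      simp only [Function.comp, hlt, if_true, ht]
      rw [Odd.neg_pow ⟨m, rfl⟩, hx]
      unfold oddLevel thetaTerm
      have e1 : q ^ (((K : ℤ) - 1 - m + 1) ^ 2) * q ^ (K * (2 * m + 1))
          = q ^ (K * (K + 1)) * q ^ (m ^ 2) := by
        simp only [← zpow_natCast]
        rw [← zpow_add₀ hq0.ne', ← zpow_add₀ hq0.ne']
        congr 1; push_cast; ring
      have e2 : z ^ (2 * ((K : ℤ) - 1 - m) + 1) * z ^ (2 * m + 1) = z ^ (2 * K) := by
        simp only [← zpow_natCast]
        rw [← zpow_add₀ hz.ne']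
        congr 1; push_cast; ring
      have e1' : q ^ (((K : ℤ) - 1 - m + 1) ^ 2)
          = q ^ (K * (K + 1)) * q ^ (m ^ 2) / q ^ (K * (2 * m + 1)) := by
        rw [← e1]; field_simp
      have e2' : z ^ (2 * ((K : ℤ) - 1 - m) + 1) = z ^ (2 * K) / z ^ (2 * m + 1) := by
        rw [← e2]; field_simp
      rw [e1', e2', mul_pow, inv_pow, inv_pow, inv_pow, inv_pow, ← pow_mul]
      field_simp
      ring
    · intro ℓ hℓ
      rw [if_neg]
      intro hlt
      exact hℓ ⟨(K - 1 - ℓ).toNat, by simp only; omega⟩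
  · intro n hn
    have : Even n := by
      by_contra ho
      obtain ⟨m, rfl⟩ := Nat.not_even_iff_odd.1 ho
      exact hn ⟨m, rfl⟩
    rw [this.neg_pow]; ring

/-- Passage `K → ∞` in `shift_odd_hasSum` by dominated convergence. -/
lemma theta_identity (hq0 : 0 < q) (hq1 : q < 1) {z : ℝ} (hz : 0 < z) {S : ℝ}
    (hS : Tendsto (oddLevel q) atTop (𝓝 S)) :
    4 * S * (∑' ℓ : ℤ, thetaTerm q z ℓ) =
      (∏' i : ℕ, ((1 + q ^ (i + 1) * z) * (1 + q ^ i * z⁻¹)) ^ 2) -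
      (∏' i : ℕ, ((1 - q ^ (i + 1) * z) * (1 - q ^ i * z⁻¹)) ^ 2) := by
  obtain ⟨C, hC⟩ := oddLevel_bdd hq0 hq1
  have h1 := (tendsto_shift hq0 hq1 z).2.sub (tendsto_shift hq0 hq1 (-z)).2
  simp_rw [← (shift_odd_hasSum hq0 hq1 hz _).tsum_eq] at h1
  have h2 := tendsto_tsum_of_dominated_convergence (𝓕 := atTop)
    (f := fun (K : ℕ) (ℓ : ℤ) =>
      if ℓ < K then 4 * oddLevel q (K - 1 - ℓ).toNat * thetaTerm q z ℓ else 0)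
    (g := fun ℓ => 4 * S * thetaTerm q z ℓ) ((thetaTerm_summable hq0 hq1 hz).mul_left (4 * C)) ?_ ?_
  · rw [← tsum_mul_left, tendsto_nhds_unique h2 h1]
    simp only [inv_neg, mul_neg, ← sub_eq_add_neg]
  · intro ℓ
    have hto : Tendsto (fun K : ℕ => ((K : ℤ) - 1 - ℓ).toNat) atTop atTop := by
      refine tendsto_atTop.2 fun b => ?_
      filter_upwards [eventually_ge_atTop (b + 1 + ℓ.toNat)] with K hK
      omega
    refine (((hS.comp hto).const_mul 4).mul_const (thetaTerm q z ℓ)).congr' ?_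
    filter_upwards [eventually_ge_atTop (ℓ.toNat + 1)] with K hK
    rw [if_pos (by omega)]; rfl
  · refine Eventually.of_forall fun K ℓ => ?_
    have ht : 0 < thetaTerm q z ℓ := by unfold thetaTerm; positivity
    have hC0 : 0 ≤ C := (oddLevel_pos hq0 hq1 0).le.trans (hC 0)
    split_ifs with h
    · have := oddLevel_pos hq0 hq1 (K - 1 - ℓ).toNat
      rw [Real.norm_of_nonneg (by positivity)]
      gcongr
      exact hC _
    · rw [norm_zero]; positivity

end Analytic

/-! ### Evaluation of `Sodd q 2` by transfer matrices -/

section Combinatorial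

/-- The sequence with which elements of `Ho` eventually agree, in the indexing `i = n + 1`. -/
def groundState (n : ℕ) : ℕ := if (n + 1) % 2 = 1 then 1 else 0

/-- The factor contributed to `q^A' 2^B'` by an entry `k` at index `n`; it equals `1` when `k` is the
ground state entry. Since `B'` is even, each unit of `B' / 2` contributes a factor `4`. -/
noncomputable def siteWeight (q : ℝ) (n k : ℕ) : ℝ :=
  if (n + 1) % 2 = 0 then q ^ ((n + 1) * k) * (if k = 0 then 1 else 4)
  else q ^ (((n : ℤ) + 1) * ((k : ℤ) - 1)) * (if k = 0 then 1 / 4 else 1)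

/-- The product of the site weights over the indices `0, …, n`. -/
noncomputable def prefixWeight (q : ℝ) (n : ℕ) (ω : ℕ → ℕ) : ℝ :=
  ∏ i ∈ Finset.range (n + 1), siteWeight q i (ω i)

/-- Sequences in the ground state after index `n`, with no two consecutive zeros among the indices
`0, …, n`, and with a zero at `n`. -/
def levelZero (n : ℕ) : Set (ℕ → ℕ) :=
  {ω | (∀ i < n, ¬(ω i = 0 ∧ ω (i + 1) = 0)) ∧ (∀ i > n, ω i = groundState i) ∧ ω n = 0}

/-- As `levelZero`, but with a non-zero entry at `n`. -/
def levelPos (n : ℕ) : Set (ℕ → ℕ) :=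
  {ω | (∀ i < n, ¬(ω i = 0 ∧ ω (i + 1) = 0)) ∧ (∀ i > n, ω i = groundState i) ∧ ω n ≠ 0}

variable {q : ℝ}

lemma siteWeight_pos (hq0 : 0 < q) (n k : ℕ) : 0 < siteWeight q n k := by
  unfold siteWeight
  split_ifs <;> positivity

lemma prefixWeight_pos (hq0 : 0 < q) (n : ℕ) (ω : ℕ → ℕ) : 0 < prefixWeight q n ω :=
  Finset.prod_pos fun _ _ => siteWeight_pos hq0 _ _

lemma prefixWeight_update (n k : ℕ) (ω : ℕ → ℕ) :
    prefixWeight q (n + 1) (Function.update ω (n + 1) k)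
      = prefixWeight q n ω * siteWeight q (n + 1) k := by
  unfold prefixWeight
  rw [Finset.prod_range_succ, Function.update_self]
  congr 1
  refine Finset.prod_congr rfl fun i hi => ?_
  rw [Function.update_of_ne]
  have := Finset.mem_range.1 hi
  omega

lemma levelZero_disjoint (n : ℕ) : Disjoint (levelZero n) (levelPos n) :=
  Set.disjoint_left.2 fun _ h1 h2 => h2.2.2 h1.2.2

lemma update_injective {n : ℕ} {s : Set (ℕ → ℕ)}
    (hs : ∀ ω ∈ s, ω (n + 1) = groundState (n + 1)) :
    Function.Injective fun p : s × ℕ => Function.update p.1.1 (n + 1) p.2 := by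
  rintro ⟨⟨ω, hω⟩, k⟩ ⟨⟨ω', hω'⟩, k'⟩ h
  simp only at h
  have hk : k = k' := by simpa using congrFun h (n + 1)
  have : ω = ω' := by
    funext i
    by_cases hi : i = n + 1
    · rw [hi, hs ω hω, hs ω' hω']
    · simpa [hi] using congrFun h i
  subst hk this
  rfl

lemma levelZero_succ (n : ℕ) : levelZero (n + 1)
    = Set.range fun ω : levelPos n => Function.update ω.1 (n + 1) 0 := by
  ext ω
  constructor
  · rintro ⟨h1, h2, h3⟩
    refine ⟨⟨Function.update ω (n + 1) (groundState (n + 1)), ?_, ?_, ?_⟩, ?_⟩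
    · intro i hi
      rw [Function.update_of_ne (by omega), Function.update_of_ne (by omega)]
      exact h1 i (by omega)
    · intro i hi
      by_cases h : i = n + 1
      · subst h; simp
      · rw [Function.update_of_ne h]; exact h2 i (by omega)
    · rw [Function.update_of_ne (by omega)]
      exact fun h => h1 n (by omega) ⟨h, h3⟩
    · simp [← h3]
  · rintro ⟨⟨ω, h1, h2, h3⟩, rfl⟩
    refine ⟨?_, ?_, by simp⟩
    · intro i hi
      simp only
      rw [Function.update_of_ne (by omega)]
      by_cases h : i = n
      · subst h; exact fun h => h3 h.1
      · rw [Function.update_of_ne (by omega)]; exact h1 i (by omega)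
    · intro i hi
      simp only
      rw [Function.update_of_ne (by omega)]
      exact h2 i (by omega)

lemma levelPos_succ (n : ℕ) : levelPos (n + 1)
    = Set.range fun p : (levelZero n ∪ levelPos n : Set (ℕ → ℕ)) × ℕ =>
        Function.update p.1.1 (n + 1) (p.2 + 1) := by
  ext ω
  constructor
  · rintro ⟨h1, h2, h3⟩
    have hc : (∀ i < n, ¬(Function.update ω (n + 1) (groundState (n + 1)) i = 0 ∧
        Function.update ω (n + 1) (groundState (n + 1)) (i + 1) = 0)) ∧
        (∀ i > n, Function.update ω (n + 1) (groundState (n + 1)) i = groundState i) := by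
      constructor
      · intro i hi
        rw [Function.update_of_ne (by omega), Function.update_of_ne (by omega)]
        exact h1 i (by omega)
      · intro i hi
        by_cases h : i = n + 1
        · subst h; simp
        · rw [Function.update_of_ne h]; exact h2 i (by omega)
    refine ⟨(⟨Function.update ω (n + 1) (groundState (n + 1)), ?_⟩, ω (n + 1) - 1), ?_⟩
    · by_cases h : Function.update ω (n + 1) (groundState (n + 1)) n = 0
      · exact Or.inl ⟨hc.1, hc.2, h⟩
      · exact Or.inr ⟨hc.1, hc.2, h⟩
    · simp [Nat.sub_add_cancel (Nat.one_le_iff_ne_zero.2 h3)]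
  · rintro ⟨⟨⟨ω, h⟩, k⟩, rfl⟩
    obtain ⟨h1, h2⟩ : (∀ i < n, ¬(ω i = 0 ∧ ω (i + 1) = 0)) ∧ (∀ i > n, ω i = groundState i) := by
      rcases h with h | h <;> exact ⟨h.1, h.2.1⟩
    refine ⟨?_, ?_, by simp⟩
    · intro i hi
      simp only
      by_cases h : i = n
      · subst h; simp
      · rw [Function.update_of_ne (by omega), Function.update_of_ne (by omega)]
        exact h1 i (by omega)
    · intro i hi
      simp only
      rw [Function.update_of_ne (by omega)]
      exact h2 i (by omega)

/-- Transfer step to a zero entry: the previous entry has to be non-zero. -/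
lemma levelZero_succ_hasSum {n : ℕ} {b : ℝ}
    (hb : HasSum (fun ω : levelPos n => prefixWeight q n ω) b) :
    HasSum (fun ω : levelZero (n + 1) => prefixWeight q (n + 1) ω)
      (b * siteWeight q (n + 1) 0) := by
  have hinj : Function.Injective fun ω : levelPos n => Function.update ω.1 (n + 1) 0 := by
    intro ω ω' h
    have := @update_injective n (levelPos n) (fun ω hω => hω.2.1 _ (by omega)) (ω, 0) (ω', 0) h
    exact (Prod.ext_iff.1 this).1
  rw [levelZero_succ, hinj.hasSum_range_iff (f := prefixWeight q (n + 1))]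
  refine (hb.mul_right (siteWeight q (n + 1) 0)).congr_fun fun ω => ?_
  exact prefixWeight_update n 0 ω

/-- Transfer step to a non-zero entry: the previous entry is arbitrary. -/
lemma levelPos_succ_hasSum (hq0 : 0 < q) {n : ℕ} {a b s : ℝ}
    (ha : HasSum (fun ω : levelZero n => prefixWeight q n ω) a)
    (hb : HasSum (fun ω : levelPos n => prefixWeight q n ω) b)
    (hs : HasSum (fun k => siteWeight q (n + 1) (k + 1)) s) :
    HasSum (fun ω : levelPos (n + 1) => prefixWeight q (n + 1) ω) ((a + b) * s) := by
  have hab : HasSum (fun ω : (levelZero n ∪ levelPos n : Set (ℕ → ℕ)) => prefixWeight q n ω)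
      (a + b) := HasSum.add_disjoint (f := prefixWeight q n) (levelZero_disjoint n) ha hb
  have hinj : Function.Injective fun p : (levelZero n ∪ levelPos n : Set (ℕ → ℕ)) × ℕ =>
      Function.update p.1.1 (n + 1) (p.2 + 1) := by
    rintro ⟨ω, k⟩ ⟨ω', k'⟩ h
    have := @update_injective n (levelZero n ∪ levelPos n)
      (fun ω hω => by rcases hω with hω | hω <;> exact hω.2.1 _ (by omega))
      (ω, k + 1) (ω', k' + 1) h
    simpa using this
  rw [levelPos_succ, hinj.hasSum_range_iff (f := prefixWeight q (n + 1))]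
  have hsum := hab.summable.mul_of_nonneg hs.summable
    (fun ω => (prefixWeight_pos hq0 n ω).le) (fun k => (siteWeight_pos hq0 _ _).le)
  refine (hab.mul hs hsum).congr_fun fun p => ?_
  exact prefixWeight_update n (p.2 + 1) p.1

lemma siteWeight_even_hasSum (hq0 : 0 < q) (hq1 : q < 1) (k : ℕ) :
    HasSum (fun j => siteWeight q (2 * k) (j + 1)) (1 - q ^ (2 * k + 1))⁻¹ := by
  refine (hasSum_geometric_of_lt_one (r := q ^ (2 * k + 1)) (by positivity)
    (pow_lt_one₀ hq0.le hq1 (by omega))).congr_fun fun j => ?_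
  rw [siteWeight, if_neg (by omega), if_neg (by omega), mul_one, ← pow_mul, ← zpow_natCast]
  congr 1; push_cast; ring

lemma siteWeight_odd_hasSum (hq0 : 0 < q) (hq1 : q < 1) (k : ℕ) :
    HasSum (fun j => siteWeight q (2 * k + 1) (j + 1))
      (4 * q ^ (2 * k + 2) * (1 - q ^ (2 * k + 2))⁻¹) := by
  refine ((hasSum_geometric_of_lt_one (r := q ^ (2 * k + 2)) (by positivity)
    (pow_lt_one₀ hq0.le hq1 (by omega))).mul_left (4 * q ^ (2 * k + 2))).congr_fun fun j => ?_
  rw [siteWeight, if_pos (by omega), if_neg (by omega), pow_mul, pow_succ]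
  ring

lemma siteWeight_even_zero (k : ℕ) : siteWeight q (2 * k) 0 = (q ^ (2 * k + 1))⁻¹ * (1 / 4) := by
  rw [siteWeight, if_neg (by omega), if_pos rfl, ← zpow_natCast, ← zpow_neg]
  congr 2; push_cast; ring

lemma siteWeight_odd_zero (k : ℕ) : siteWeight q (2 * k + 1) 0 = 1 := by
  rw [siteWeight, if_pos (by omega), if_pos rfl]; simp

/-- The transfer-matrix recursion for the sums over `levelZero` and `levelPos` is the recurrence of
`pairCoeff`. Combinatorially, the entries of `ω` are the gaps between consecutive particles in a
configuration with at most two particles per site. -/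
lemma level_hasSum (hq0 : 0 < q) (hq1 : q < 1) (k : ℕ) :
    HasSum (fun ω : levelZero (2 * k) => prefixWeight q (2 * k) ω)
      (q⁻¹ * (q⁻¹) ^ (k ^ 2) * pairCoeff q (2 * k) / 4) ∧
    HasSum (fun ω : levelPos (2 * k) => prefixWeight q (2 * k) ω) (oddLevel q k) := by
  induction k with
  | zero =>
    have e0 : levelZero 0 = Set.range fun _ : Unit => Function.update groundState 0 0 := by
      ext ω
      constructor
      · rintro ⟨-, h2, h3⟩
        refine ⟨(), funext fun i => ?_⟩
        rcases Nat.eq_zero_or_pos i with rfl | hi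
        · simp [h3]
        · simp [hi.ne', h2 i hi]
      · rintro ⟨-, rfl⟩
        exact ⟨by simp, fun i hi => Function.update_of_ne (by omega) _ _, by simp⟩
    have e1 : levelPos 0 = Set.range fun k : ℕ => Function.update groundState 0 (k + 1) := by
      ext ω
      constructor
      · rintro ⟨-, h2, h3⟩
        refine ⟨ω 0 - 1, funext fun i => ?_⟩
        rcases Nat.eq_zero_or_pos i with rfl | hi
        · simp [Nat.sub_add_cancel (Nat.one_le_iff_ne_zero.2 h3)]
        · simp [hi.ne', h2 i hi]
      · rintro ⟨k, rfl⟩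
        exact ⟨by simp, fun i hi => Function.update_of_ne (by omega) _ _, by simp⟩
    have i0 : Function.Injective fun _ : Unit => Function.update groundState 0 0 :=
      fun _ _ _ => rfl
    have i1 : Function.Injective fun k : ℕ => Function.update groundState 0 (k + 1) :=
      fun k k' h => by simpa using congrFun h 0
    have hw : ∀ j, prefixWeight q 0 (Function.update groundState 0 j) = siteWeight q 0 j :=
      fun j => by simp [prefixWeight]
    rw [Nat.mul_zero, e0, e1, i0.hasSum_range_iff (f := prefixWeight q 0),
      i1.hasSum_range_iff (f := prefixWeight q 0)]
    constructor
    · convert hasSum_unique (β := Unit) _ using 1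
      have := siteWeight_even_zero (q := q) 0
      simp only [Function.comp, hw]
      rw [Nat.mul_zero] at this
      rw [this]
      simp [pairCoeff]; ring
    · convert siteWeight_even_hasSum hq0 hq1 0 using 1
      · funext j; exact hw _
      · simp [oddLevel, pairCoeff]; ring
  | succ k ih =>
    obtain ⟨ha, hb⟩ := ih
    have ha' := levelZero_succ_hasSum hb
    have hb' := levelPos_succ_hasSum hq0 ha hb (siteWeight_odd_hasSum hq0 hq1 k)
    have ha'' := levelZero_succ_hasSum hb'
    have hb'' := levelPos_succ_hasSum hq0 ha' hb' (siteWeight_even_hasSum hq0 hq1 (k + 1))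
    have r1 := pairCoeff_rec hq0 hq1 (2 * k)
    have r2 := pairCoeff_rec hq0 hq1 (2 * k + 1)
    have p1 := (one_sub_pow_pos hq0 hq1 (2 * k + 1)).ne'
    have p2 := (one_sub_pow_pos hq0 hq1 (2 * k + 2)).ne'
    have s0 : siteWeight q (2 * k + 1 + 1) 0 = (q ^ (2 * k + 3))⁻¹ * (1 / 4) :=
      siteWeight_even_zero (k + 1)
    -- the sum over `levelPos (2 * k + 1)`, simplified by the recurrence
    have eb : (q⁻¹ * q⁻¹ ^ k ^ 2 * pairCoeff q (2 * k) / 4 + oddLevel q k)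
        * (4 * q ^ (2 * k + 2) * (1 - q ^ (2 * k + 2))⁻¹)
        = q * q⁻¹ ^ k ^ 2 * pairCoeff q (2 * k + 2) := by
      unfold oddLevel
      rw [inv_pow, ← mul_assoc, mul_inv_eq_iff_eq_mul₀ (by exact p1)]
      have e : q ^ (2 * k + 2) = q ^ (2 * k) * q ^ 2 := pow_add _ _ _
      have e' : q ^ (2 * k + 1) = q ^ (2 * k) * q := pow_succ _ _
      rw [e'] at r1
      rw [mul_assoc (q * _), mul_comm (pairCoeff q (2 * k + 2)), r1, e]
      field_simp
      ring
    rw [siteWeight_odd_zero] at ha' hb''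
    rw [s0] at ha''
    rw [eb] at ha'' hb''
    have ek : (k + 1) ^ 2 = k ^ 2 + (2 * k + 1) := by ring
    constructor
    · refine (congrArg (HasSum _) ?_).mpr ha''
      rw [show 2 * (k + 1) = 2 * k + 2 by ring, ek, pow_add, inv_pow, inv_pow,
        show 2 * k + 3 = 2 * k + 1 + 2 by ring, pow_add q (2 * k + 1) 2]
      field_simp
    · refine (congrArg (HasSum _) ?_).mpr hb''
      unfold oddLevel
      rw [show 2 * (k + 1) + 1 = 2 * k + 1 + 2 by ring, ek, pow_add, inv_pow, inv_pow,
        eq_mul_inv_iff_mul_eq₀ (by exact p2)]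
      have e : q ^ (2 * k + 1 + 1) = q ^ (2 * k + 1) * q := pow_succ _ _
      rw [e, show 2 * k + 1 + 1 = 2 * k + 2 by ring] at r2
      rw [show 2 * k + 1 + 2 = 2 * k + 3 by ring] at r2 ⊢
      field_simp
      linear_combination r2

lemma weight_eq_prefixWeight (hq0 : 0 < q) {n : ℕ} {ω : ℕ → ℕ}
    (h : ∀ i > n, ω i = groundState i) :
    q ^ A'fun ω * (2 : ℝ) ^ B'fun ω = prefixWeight q n ω := by
  have hg : ∀ i, i ∉ Finset.range (n + 1) → ω i = groundState i := fun i hi =>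
    h i (by simpa using hi)
  unfold A'fun B'fun
  rw [finsum_eq_sum_of_support_subset (s := Finset.range (n + 1)),
    finsum_eq_sum_of_support_subset (s := Finset.range (n + 1)),
    finsum_eq_sum_of_support_subset (s := Finset.range (n + 1))]
  · unfold prefixWeight
    induction Finset.range (n + 1) using Finset.induction_on with
    | empty => simp
    | insert i s hi ih =>
      rw [Finset.sum_insert hi, Finset.sum_insert hi, Finset.sum_insert hi, Finset.prod_insert hi,
        ← ih, zpow_add₀ hq0.ne']
      have h2 : ∀ a b c d : ℤ, (2 : ℝ) ^ (2 * (a + b - (c + d)))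
          = (2 : ℝ) ^ (2 * (a - c)) * (2 : ℝ) ^ (2 * (b - d)) := fun a b c d => by
        rw [← zpow_add₀ two_ne_zero]; congr 1; ring
      rw [h2, mul_mul_mul_comm]
      congr 1
      unfold siteWeight
      rcases Nat.mod_two_eq_zero_or_one (i + 1) with hp | hp <;>
        rcases Nat.eq_zero_or_pos (ω i) with h0 | h0
      · simp [hp, h0]
      · have h1 : 1 ≤ ω i := h0
        simp only [hp, h1, h0.ne']
        rw [← zpow_natCast q]
        norm_num
      · simp [hp, h0]
        norm_num
      · have h1 : 1 ≤ ω i := h0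
        simp [hp, h0.ne']
  all_goals
    intro i hi
    by_contra hni
    rw [Function.mem_support] at hi
    apply hi
    rw [hg i (by simpa using hni)]
    unfold groundState
    split_ifs <;> simp_all

lemma levelPos_mono : Monotone fun k => levelPos (2 * k) := by
  refine monotone_nat_of_le_succ fun k ω ⟨h1, h2, h3⟩ => ⟨?_, fun i hi => h2 i (by omega), ?_⟩
  · intro i hi
    rcases lt_trichotomy i (2 * k) with h | rfl | h
    · exact h1 i h
    · exact fun h => h3 h.1
    · obtain rfl : i = 2 * k + 1 := by omega
      rw [h2 (2 * k + 1 + 1) (by omega), groundState, if_pos (by omega)]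
      simp
  · rw [h2 _ (by omega), groundState, if_pos (by omega)]; simp

lemma Ho_eq_iUnion : Ho = ⋃ k, levelPos (2 * k) := by
  ext ω
  simp only [Set.mem_iUnion]
  constructor
  · rintro ⟨h1, N, h2⟩
    refine ⟨N, fun i _ => h1 i, fun i hi => h2 i (by omega), ?_⟩
    rw [h2 _ (by omega), if_pos (by omega)]; simp
  · rintro ⟨k, h1, h2, h3⟩
    refine ⟨fun i => ?_, 2 * k + 1, fun i hi => h2 i (by omega)⟩
    rcases lt_trichotomy i (2 * k) with h | rfl | h
    · exact h1 i h
    · exact fun h => h3 h.1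
    · rw [h2 i h, h2 (i + 1) (by omega)]
      unfold groundState
      split_ifs <;> (simp; try omega)

/-- Monotone convergence for sums of non-negative reals along an increasing union of sets. -/
lemma tendsto_tsum_of_monotone_iUnion {α : Type*} {f : α → ℝ} (hf : ∀ x, 0 ≤ f x)
    {s : ℕ → Set α} (hs : Monotone s) {b : ℕ → ℝ} (hb : ∀ k, HasSum (fun x : s k => f x) (b k))
    {C : ℝ} (hC : ∀ k, b k ≤ C) :
    Tendsto b atTop (𝓝 (∑' x : (⋃ k, s k : Set α), f x)) := by
  have hb' : ∀ k, HasSum ((s k).indicator f) (b k) := fun k => hasSum_subtype_iff_indicator.1 (hb k)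
  have hmono : Monotone b := fun k l hkl => hasSum_le
    (fun x => Set.indicator_le_indicator_of_subset (hs hkl) hf x) (hb' k) (hb' l)
  have hbdd : BddAbove (Set.range b) := ⟨C, by rintro _ ⟨k, rfl⟩; exact hC k⟩
  have hlim := tendsto_atTop_ciSup hmono hbdd
  suffices h : HasSum ((⋃ k, s k).indicator f) (⨆ k, b k) by
    have h' : HasSum (fun x : (⋃ k, s k : Set α) => f x) _ := hasSum_subtype_iff_indicator.2 h
    rwa [h'.tsum_eq]
  refine hasSum_of_isLUB_of_nonneg _ (Set.indicator_nonneg fun x _ => hf x) ⟨?_, ?_⟩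
  · rintro _ ⟨t, rfl⟩
    have hmem : ∀ x, Tendsto (fun k => (s k).indicator f x) atTop
        (𝓝 ((⋃ k, s k).indicator f x)) := fun x =>
      (hs.tendsto_indicator s f x).mono_right (pure_le_nhds _)
    refine le_of_tendsto_of_tendsto' (tendsto_finsetSum t fun x _ => hmem x) hlim fun k => ?_
    exact sum_le_hasSum t (fun x _ => Set.indicator_nonneg (fun y _ => hf y) x) (hb' k)
  · intro u hu
    refine ciSup_le fun k => hasSum_le_of_sum_le (hb' k) fun t => ?_
    refine (Finset.sum_le_sum fun x _ => ?_).trans (hu ⟨t, rfl⟩)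
    exact Set.indicator_le_indicator_of_subset (Set.subset_iUnion s k) hf x

lemma oddLevel_tendsto_Sodd (hq0 : 0 < q) (hq1 : q < 1) :
    Tendsto (oddLevel q) atTop (𝓝 (Sodd q 2)) := by
  obtain ⟨C, hC⟩ := oddLevel_bdd hq0 hq1
  unfold Sodd
  rw [Ho_eq_iUnion]
  refine tendsto_tsum_of_monotone_iUnion (f := fun ω => q ^ A'fun ω * (2 : ℝ) ^ B'fun ω)
    (fun ω => by positivity) levelPos_mono (fun k => ?_) hC
  refine (level_hasSum hq0 hq1 k).2.congr_fun fun ω => ?_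
  exact weight_eq_prefixWeight hq0 ω.2.2.1

end Combinatorial

theorem statement8 (q z : ℝ) (hq0 : 0 < q) (hq1 : q < 1) (hz : 0 < z) :
    Summable (fun ℓ : ℤ => q ^ ((ℓ + 1) ^ 2) * z ^ (2 * ℓ + 1)) ∧
    Multipliable (fun i : ℕ => ((1 + q ^ (i + 1) * z) * (1 + q ^ i * z⁻¹)) ^ 2) ∧
    Multipliable (fun i : ℕ => ((1 - q ^ (i + 1) * z) * (1 - q ^ i * z⁻¹)) ^ 2) ∧
    4 * Sodd q 2 * (∑' ℓ : ℤ, q ^ ((ℓ + 1) ^ 2) * z ^ (2 * ℓ + 1)) =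
      (∏' i : ℕ, ((1 + q ^ (i + 1) * z) * (1 + q ^ i * z⁻¹)) ^ 2) -
      (∏' i : ℕ, ((1 - q ^ (i + 1) * z) * (1 - q ^ i * z⁻¹)) ^ 2) := by
  refine ⟨thetaTerm_summable hq0 hq1 hz, (tendsto_shift hq0 hq1 z).1, ?_,
    theta_identity hq0 hq1 hz (oddLevel_tendsto_Sodd hq0 hq1)⟩
  simpa only [inv_neg, mul_neg, ← sub_eq_add_neg] using (tendsto_shift hq0 hq1 (-z)).1
end

section
/- For every real number q with 0 < q < 1, one has S_even(q,2) = Π_{i≥1} (1 + q^{2i−1})²·(1 + q^{i})/(1 − q^{i}), the infinite product converging absolutely. -/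
/-!
The weight `q ^ A * 2 ^ B` of a sequence is a product of one factor per entry, and the
only constraint couples neighbouring entries, so the sum over the sequences that follow the tail
from index `N` on is computed by a 2 × 2 transfer matrix (`hasSum_conf`). All weights are
non-negative, hence `Seven q 2` is the limit of these sums (`Seven_eq_of_tendsto`).

Let `a m` be the sum for `N = 2 m` and `(x; p)_m = ∏_{k < m} (1 - x p ^ k)`. Eliminating the second
component of the transfer recursion, `d m = a m * (q; q²)_m` satisfies
`(1 - q^(2m+4)) d (m+2) = (1 + q + 2 q^(2m+3)) d (m+1) - (q - q^(2m+2)) d m`,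
a recurrence of Al-Salam–Chihara type. For the increments `e n = d n - d (n-1)` and
`h s = ∑ e n s^n` it reads
`(1 - q s) (1 - q² s) h(s) = (1 + q s)² h(q² s)` (`tsum_functional_eq`). The series `∑ e n` converges
absolutely, because `a` is increasing and bounded. So `lim d = h 1`, and iterating the
functional equation from `s = 1` gives `h 1 = (-q; q²)² / (q; q)` (infinite products), whence
`lim a = (-q; q²)² / ((q; q) (q; q²)) = (-q; q²)² (q²; q²) / (q; q)²` (`tendsto_of_rec`). This is the
claimed product since `(1 + q^i) / (1 - q^i) = (1 - q^(2i)) / (1 - q^i)²`.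
-/

open scoped BigOperators

open Filter Topology

/-! ### Weighted sequences and the transfer matrix -/

/-- The common tail of the sequences in `He`. -/
def tailSeq (n : ℕ) : ℕ := if (n + 1) % 2 = 0 then 1 else 0

/-- The factor contributed to `q ^ A * 2 ^ B` by an entry of value `k` at index `n`
(that is, at `i = n + 1`). -/
noncomputable def entryWeight (q : ℝ) (n k : ℕ) : ℝ :=
  if n % 2 = 0 then q ^ ((n + 1) * k) * (if k = 0 then 1 else 4)
  else q ^ (((n : ℤ) + 1) * ((k : ℤ) - 1)) * (if k = 0 then 1 / 4 else 1)

/-- The sum of `entryWeight q n k` over `k ≥ 1`. -/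
noncomputable def posWeight (q : ℝ) (n : ℕ) : ℝ :=
  if n % 2 = 0 then 4 * q ^ (n + 1) / (1 - q ^ (n + 1)) else 1 / (1 - q ^ (n + 1))

/-- Sequences following the tail from index `N` on, with no two adjacent zeros among the first `N`
entries, and whose entry at index `N - 1` (if there is one) is positive. -/
def posConf (N : ℕ) : Set (ℕ → ℕ) :=
  {ω | (∀ n ≥ N, ω n = tailSeq n) ∧ (∀ n, n + 1 < N → ¬(ω n = 0 ∧ ω (n + 1) = 0)) ∧
    ∀ n, n + 1 = N → ω n ≠ 0}

/-- As `posConf`, but with a zero at index `N - 1`; empty for `N = 0`. -/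
def zeroConf (N : ℕ) : Set (ℕ → ℕ) :=
  {ω | (∀ n ≥ N, ω n = tailSeq n) ∧ (∀ n, n + 1 < N → ¬(ω n = 0 ∧ ω (n + 1) = 0)) ∧
    ∃ n, n + 1 = N ∧ ω n = 0}

/-- The pair of partition functions of `posConf N` and `zeroConf N`, given by the transfer
matrix. -/
noncomputable def partFun (q : ℝ) : ℕ → ℝ × ℝ
  | 0 => (1, 0)
  | N + 1 => (posWeight q N * ((partFun q N).1 + (partFun q N).2),
      entryWeight q N 0 * (partFun q N).1)

/-- The product of the weights of the first `N` entries. -/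
noncomputable def confWeight (q : ℝ) (N : ℕ) (ω : ℕ → ℕ) : ℝ :=
  ∏ n ∈ Finset.range N, entryWeight q n (ω n)

lemma entryWeight_nonneg {q : ℝ} (hq0 : 0 < q) (n k : ℕ) : 0 ≤ entryWeight q n k := by
  unfold entryWeight
  split_ifs <;> positivity

lemma confWeight_nonneg {q : ℝ} (hq0 : 0 < q) (N : ℕ) (ω : ℕ → ℕ) : 0 ≤ confWeight q N ω :=
  Finset.prod_nonneg fun _ _ => entryWeight_nonneg hq0 _ _

lemma hasSum_entryWeight {q : ℝ} (hq0 : 0 < q) (hq1 : q < 1) (n : ℕ) :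
    HasSum (fun k => entryWeight q n (k + 1)) (posWeight q n) := by
  have hx1 : q ^ (n + 1) < 1 := pow_lt_one₀ hq0.le hq1 (by simp)
  have hg := hasSum_geometric_of_lt_one (pow_pos hq0 (n + 1)).le hx1
  unfold entryWeight posWeight
  by_cases h : n % 2 = 0
  · simp only [h, if_true]
    have h4 := hg.mul_left (4 * q ^ (n + 1))
    rw [← div_eq_mul_inv] at h4
    refine (funext fun k => ?_ : (fun k => q ^ ((n + 1) * (k + 1)) *
      (if k + 1 = 0 then (1 : ℝ) else 4)) = _) ▸ h4
    rw [if_neg (Nat.succ_ne_zero k), pow_mul]; ring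
  · simp only [h, if_false]
    convert hg using 2 with k
    · rw [if_neg (Nat.succ_ne_zero k)]
      push_cast
      rw [add_sub_cancel_right, mul_one, zpow_mul, zpow_natCast]
      norm_cast
    · simp

lemma confWeight_update (q : ℝ) (N : ℕ) (ω : ℕ → ℕ) (k : ℕ) :
    confWeight q (N + 1) (Function.update ω N k) = entryWeight q N k * confWeight q N ω := by
  unfold confWeight
  rw [Finset.prod_range_succ, mul_comm, Function.update_self]
  congr 1
  refine Finset.prod_congr rfl fun n hn => ?_
  rw [Function.update_of_ne (Finset.mem_range.1 hn).ne]

/-- Appending a positive entry: any configuration of length `N` may precede it. -/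
def posConfEquiv (N : ℕ) : ℕ × ↥(posConf N ∪ zeroConf N) ≃ posConf (N + 1) where
  toFun p := ⟨Function.update p.2.1 N (p.1 + 1), by
    obtain ⟨k, ω, hω⟩ := p
    refine ⟨fun n hn => ?_, fun n hn => ?_, fun n hn => ?_⟩
    · rw [Function.update_of_ne (by omega)]
      rcases hω with h | h <;> exact h.1 n (by omega)
    · rw [Function.update_of_ne (by omega)]
      rcases eq_or_ne (n + 1) N with h1 | h1
      · subst h1; simp
      · rw [Function.update_of_ne h1]
        rcases hω with h | h <;> exact h.2.1 n (by omega)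
    · obtain rfl : n = N := by omega
      simp⟩
  invFun ω := (ω.1 N - 1, ⟨Function.update ω.1 N (tailSeq N), by
    obtain ⟨ω, h1, h2, h3⟩ := ω
    have hA : ∀ n ≥ N, Function.update ω N (tailSeq N) n = tailSeq n := by
      intro n hn
      rcases eq_or_ne n N with rfl | h
      · simp
      · rw [Function.update_of_ne h]; exact h1 n (by omega)
    have hB : ∀ n, n + 1 < N → ¬(Function.update ω N (tailSeq N) n = 0 ∧
        Function.update ω N (tailSeq N) (n + 1) = 0) := by
      intro n hn
      rw [Function.update_of_ne (by omega), Function.update_of_ne (by omega)]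
      exact h2 n (by omega)
    by_cases h : ∃ n, n + 1 = N ∧ Function.update ω N (tailSeq N) n = 0
    · exact Or.inr ⟨hA, hB, h⟩
    · exact Or.inl ⟨hA, hB, fun n hn h0 => h ⟨n, hn, h0⟩⟩⟩)
  left_inv := by
    rintro ⟨k, ω, hω⟩
    have ht : tailSeq N = ω N := by
      rcases hω with h | h <;> exact (h.1 N le_rfl).symm
    simp [ht]
  right_inv := by
    rintro ⟨ω, h1, h2, h3⟩
    have h0 := h3 N rfl
    have : ω N - 1 + 1 = ω N := by omega
    simp [this]

/-- Appending a zero: the preceding entry has to be positive. -/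
def zeroConfEquiv (N : ℕ) : posConf N ≃ zeroConf (N + 1) where
  toFun ω := ⟨Function.update ω.1 N 0, by
    obtain ⟨ω, h1, h2, h3⟩ := ω
    refine ⟨fun n hn => ?_, fun n hn => ?_, N, rfl, by simp⟩
    · rw [Function.update_of_ne (by omega)]
      exact h1 n (by omega)
    · rw [Function.update_of_ne (by omega)]
      rcases eq_or_ne (n + 1) N with h | h
      · exact fun h' => h3 n h h'.1
      · rw [Function.update_of_ne h]
        exact h2 n (by omega)⟩
  invFun ω := ⟨Function.update ω.1 N (tailSeq N), by
    obtain ⟨ω, h1, h2, m, hm, h3⟩ := ω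
    obtain rfl : m = N := by omega
    refine ⟨fun n hn => ?_, fun n hn => ?_, fun n hn => ?_⟩
    · rcases eq_or_ne n m with rfl | h
      · simp
      · rw [Function.update_of_ne h]; exact h1 n (by omega)
    · rw [Function.update_of_ne (by omega), Function.update_of_ne (by omega)]
      exact h2 n (by omega)
    · rw [Function.update_of_ne (by omega)]
      exact fun h0 => h2 n (by omega) ⟨h0, hn ▸ h3⟩⟩
  left_inv := by
    rintro ⟨ω, h1, h2, h3⟩
    simp [← h1 N le_rfl]
  right_inv := by
    rintro ⟨ω, h1, h2, m, hm, h3⟩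
    obtain rfl : m = N := by omega
    have : Function.update ω m 0 = ω := by rw [← h3]; simp
    simp [this]

lemma hasSum_conf {q : ℝ} (hq0 : 0 < q) (hq1 : q < 1) (N : ℕ) :
    HasSum (confWeight q N ∘ (↑) : posConf N → ℝ) (partFun q N).1 ∧
    HasSum (confWeight q N ∘ (↑) : zeroConf N → ℝ) (partFun q N).2 := by
  induction N with
  | zero =>
    constructor
    · have : posConf 0 = {tailSeq} := by
        ext ω
        simp [posConf, funext_iff]
      rw [this]
      have h := hasSum_unique (confWeight q 0 ∘ (↑) : ({tailSeq} : Set (ℕ → ℕ)) → ℝ)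
      simpa [confWeight, partFun] using h
    · have : zeroConf 0 = ∅ := by
        ext ω
        simp [zeroConf]
      rw [this]
      exact hasSum_empty
  | succ N ih =>
    obtain ⟨ihp, ihz⟩ := ih
    constructor
    · rw [← (posConfEquiv N).hasSum_iff]
      have hd : Disjoint (posConf N) (zeroConf N) := by
        rw [Set.disjoint_left]
        rintro ω ⟨-, -, h⟩ ⟨-, -, n, hn, h0⟩
        exact h n hn h0
      have hu := ihp.add_disjoint hd ihz
      have hw := hasSum_entryWeight hq0 hq1 N
      have := hw.mul hu (hw.summable.mul_of_nonneg hu.summable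
        (fun _ => entryWeight_nonneg hq0 _ _) (fun _ => confWeight_nonneg hq0 _ _))
      exact (funext fun p => confWeight_update q N _ _ :
        confWeight q (N + 1) ∘ (↑) ∘ posConfEquiv N = _) ▸ this
    · rw [← (zeroConfEquiv N).hasSum_iff]
      exact (funext fun p => confWeight_update q N _ _ :
        confWeight q (N + 1) ∘ (↑) ∘ zeroConfEquiv N = _) ▸ ihp.mul_left (entryWeight q N 0)

lemma posConf_subset_He (m : ℕ) : posConf (2 * m) ⊆ He := by
  rintro ω ⟨h1, h2, h3⟩
  refine ⟨fun n => ?_, 2 * m, h1⟩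
  rcases lt_trichotomy (n + 1) (2 * m) with h | h | h
  · exact h2 n h
  · exact fun h' => h3 n h h'.1
  · rw [h1 n (by omega), h1 (n + 1) (by omega)]
    unfold tailSeq
    split_ifs <;> simp
    omega

lemma mem_posConf_of_le {ω : ℕ → ℕ} (h : ω ∈ He) {N m : ℕ}
    (hN : ∀ n ≥ N, ω n = if (n + 1) % 2 = 0 then 1 else 0) (hm : N ≤ 2 * m) :
    ω ∈ posConf (2 * m) := by
  refine ⟨fun n hn => hN n (by omega), fun n _ => h.1 n, fun n hn h0 => h.1 n ⟨h0, ?_⟩⟩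
  rw [hN (n + 1) (by omega), if_neg (by omega)]

/-- On sequences that follow the tail from `N` on, the truncated weight is the full one, as tail
entries have weight one. -/
lemma weight_eq_confWeight {q : ℝ} (hq0 : 0 < q) {ω : ℕ → ℕ} {N : ℕ}
    (h : ∀ n ≥ N, ω n = tailSeq n) :
    q ^ Afun ω * (2 : ℝ) ^ Bfun ω = confWeight q N ω := by
  have hmem : ∀ n, ¬n < N → ω n = tailSeq n := fun n hn => h n (by omega)
  have e1 : Afun ω = ∑ n ∈ Finset.range N, (if (n + 1) % 2 = 1 then ((n : ℤ) + 1) * (ω n : ℤ)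
             else ((n : ℤ) + 1) * ((ω n : ℤ) - 1)) := by
    refine finsum_eq_sum_of_support_subset _ fun n hn => ?_
    by_contra hc
    simp only [Finset.coe_range, Set.mem_Iio] at hc
    apply hn
    simp only [hmem n hc, tailSeq]
    split_ifs <;> simp_all
  have e2 : (∑ᶠ n : ℕ, if (n + 1) % 2 = 1 ∧ 1 ≤ ω n then (1 : ℤ) else 0) =
      ∑ n ∈ Finset.range N, if (n + 1) % 2 = 1 ∧ 1 ≤ ω n then (1 : ℤ) else 0 := by
    refine finsum_eq_sum_of_support_subset _ fun n hn => ?_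
    by_contra hc
    simp only [Finset.coe_range, Set.mem_Iio] at hc
    apply hn
    simp only [hmem n hc, tailSeq]
    split_ifs <;> simp_all
  have e3 : (∑ᶠ n : ℕ, if (n + 1) % 2 = 0 ∧ ω n = 0 then (1 : ℤ) else 0) =
      ∑ n ∈ Finset.range N, if (n + 1) % 2 = 0 ∧ ω n = 0 then (1 : ℤ) else 0 := by
    refine finsum_eq_sum_of_support_subset _ fun n hn => ?_
    by_contra hc
    simp only [Finset.coe_range, Set.mem_Iio] at hc
    apply hn
    simp only [hmem n hc, tailSeq]
    split_ifs <;> simp_all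
  unfold Bfun
  rw [e1, e2, e3, ← Finset.sum_sub_distrib, zpow_mul]
  clear h hmem e1 e2 e3
  unfold confWeight
  induction N with
  | zero => simp
  | succ N ih =>
    rw [Finset.prod_range_succ, ← ih, Finset.sum_range_succ, Finset.sum_range_succ,
      zpow_add₀ hq0.ne', zpow_add₀ (by norm_num), mul_mul_mul_comm]
    congr 1
    unfold entryWeight
    by_cases hp : N % 2 = 0
    · have h1 : (N + 1) % 2 = 1 := by omega
      have h3 : q ^ (((N : ℤ) + 1) * (ω N : ℤ)) = q ^ ((N + 1) * ω N) := by
        rw [← zpow_natCast]; push_cast; rfl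
      by_cases h0 : ω N = 0
      · simp [hp, h1, h0]
      · have : 1 ≤ ω N := by omega
        simp [hp, h1, h0, this, h3]
        norm_num
    · have h1 : (N + 1) % 2 = 0 := by omega
      by_cases h0 : ω N = 0
      · simp [hp, h1, h0]
        norm_num
      · simp [hp, h1, h0]

lemma partFun_nonneg {q : ℝ} (hq0 : 0 < q) (hq1 : q < 1) (N : ℕ) :
    0 ≤ (partFun q N).1 ∧ 0 ≤ (partFun q N).2 :=
  ⟨(hasSum_conf hq0 hq1 N).1.nonneg fun _ => confWeight_nonneg hq0 _ _,
    (hasSum_conf hq0 hq1 N).2.nonneg fun _ => confWeight_nonneg hq0 _ _⟩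

/-- The sum over `He` is the increasing limit of the partition functions of its subsets
`posConf (2 * m)`. -/
lemma Seven_eq_of_tendsto {q L : ℝ} (hq0 : 0 < q) (hq1 : q < 1)
    (hmono : Monotone fun m => (partFun q (2 * m)).1)
    (hlim : Tendsto (fun m => (partFun q (2 * m)).1) atTop (𝓝 L)) : Seven q 2 = L := by
  have hnn : ∀ ω : ℕ → ℕ, 0 ≤ q ^ Afun ω * (2 : ℝ) ^ Bfun ω := fun ω => by positivity
  have hsum : ∀ m, HasSum (fun ω : posConf (2 * m) => q ^ Afun ω.1 * (2 : ℝ) ^ Bfun ω.1)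
      (partFun q (2 * m)).1 := by
    intro m
    convert (hasSum_conf hq0 hq1 (2 * m)).1 using 2 with ω
    exact weight_eq_confWeight hq0 ω.2.1
  refine (hasSum_of_isLUB_of_nonneg L (fun ω : He => hnn ω.1) ⟨?_, ?_⟩).tsum_eq
  · rintro _ ⟨s, rfl⟩
    choose N hN using fun ω : He => ω.2.2
    have hs : ∀ ω ∈ s, ω.1 ∈ posConf (2 * s.sup N) := fun ω hω =>
      mem_posConf_of_le ω.2 (hN ω) (by have := Finset.le_sup (f := N) hω; omega)
    refine le_trans ?_ (hmono.ge_of_tendsto hlim (s.sup N))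
    let e : s ↪ posConf (2 * s.sup N) := ⟨fun ω => ⟨ω.1.1, hs ω.1 ω.2⟩, fun a b hab =>
      Subtype.ext (Subtype.ext (by simpa using congrArg Subtype.val hab))⟩
    have := sum_le_hasSum (s.attach.map e) (fun ω _ => hnn ω.1) (hsum (s.sup N))
    rw [Finset.sum_map] at this
    exact (Finset.sum_attach s
      (fun ω : He => q ^ Afun ω.1 * (2 : ℝ) ^ Bfun ω.1)).symm.le.trans this
  · intro u hu
    refine le_of_tendsto' hlim fun m => ?_
    refine le_of_tendsto' (hsum m) fun s => ?_
    have := hu ⟨s.map ⟨Set.inclusion (posConf_subset_He m), Set.inclusion_injective _⟩, rfl⟩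
    dsimp only at this
    rwa [Finset.sum_map] at this

/-! ### Solving the recursion in the limit -/

lemma summable_pow_affine {q : ℝ} (hq0 : 0 < q) (hq1 : q < 1) (a b : ℕ) (ha : a ≠ 0) :
    Summable fun k : ℕ => q ^ (a * k + b) := by
  have := (summable_geometric_of_lt_one (pow_pos hq0 a).le (pow_lt_one₀ hq0.le hq1 ha)).mul_right
    (q ^ b)
  simpa only [pow_add, pow_mul] using this

lemma multipliable_one_sub {q : ℝ} (hq0 : 0 < q) (hq1 : q < 1) (a b : ℕ) (ha : a ≠ 0) :
    Multipliable fun k : ℕ => 1 - q ^ (a * k + b) := by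
  simpa only [sub_eq_add_neg] using
    Real.multipliable_one_add_of_summable (summable_pow_affine hq0 hq1 a b ha).neg

lemma tprod_one_sub_ne_zero {q : ℝ} (hq0 : 0 < q) (hq1 : q < 1) (a b : ℕ) (ha : a ≠ 0)
    (hb : b ≠ 0) : ∏' k : ℕ, (1 - q ^ (a * k + b)) ≠ 0 := by
  have := tprod_one_add_ne_zero_of_summable (f := fun k : ℕ => -q ^ (a * k + b)) ?_
    (summable_pow_affine hq0 hq1 a b ha).neg.norm
  · simpa only [sub_eq_add_neg] using this
  · intro k
    have : q ^ (a * k + b) < 1 := pow_lt_one₀ hq0.le hq1 (by omega)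
    exact ne_of_gt (by linarith)

/-- The function `h s = ∑ e n * s ^ n` satisfies the first-order `q ^ 2`-difference equation
encoded by the recurrence of its coefficients. -/
lemma tsum_functional_eq {q s : ℝ} {e : ℕ → ℝ} (hq0 : 0 < q) (hq1 : q < 1) (hs0 : 0 ≤ s)
    (hs1 : s ≤ 1) (he : Summable e) (h1 : (1 - q ^ 2) * e 1 = (3 * q + q ^ 2) * e 0)
    (h2 : ∀ n, (1 - q ^ (2 * n + 4)) * e (n + 2) =
      (q + q ^ 2 + 2 * q ^ (2 * n + 3)) * e (n + 1) - (q ^ 3 - q ^ (2 * n + 2)) * e n) :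
    (1 - q * s) * (1 - q ^ 2 * s) * ∑' n, e n * s ^ n =
      (1 + q * s) ^ 2 * ∑' n, e n * (q ^ 2 * s) ^ n := by
  have hsum : ∀ r : ℝ, 0 ≤ r → r ≤ 1 → Summable fun n => e n * r ^ n := fun r hr0 hr1 =>
    Summable.of_norm_bounded he.abs fun n => by
      rw [norm_mul, norm_pow, Real.norm_eq_abs, Real.norm_eq_abs, abs_of_nonneg hr0]
      exact mul_le_of_le_one_right (abs_nonneg _) (pow_le_one₀ hr0 hr1)
  have hr0 : 0 ≤ q ^ 2 * s := by positivity
  have hr1 : q ^ 2 * s ≤ 1 := mul_le_one₀ (pow_le_one₀ hq0.le hq1.le) hs0 hs1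
  -- Initial terms are split off so that all series are indexed by the exponent `n + 2` of `s`.
  have split1 : ∀ r : ℝ, 0 ≤ r → r ≤ 1 →
      ∑' n, e n * r ^ n = e 0 + ∑' n, e (n + 1) * r ^ (n + 1) := fun r a b => by
    rw [(hsum r a b).tsum_eq_zero_add]; simp
  have split2 : ∀ r : ℝ, 0 ≤ r → r ≤ 1 →
      ∑' n, e n * r ^ n = e 0 + e 1 * r + ∑' n, e (n + 2) * r ^ (n + 2) := fun r a b => by
    rw [split1 r a b, ((summable_nat_add_iff 1).2 (hsum r a b)).tsum_eq_zero_add]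
    simp [add_assoc]
  have S0 := fun r a b => (hsum r a b)
  have S1 := fun r a b => (summable_nat_add_iff 1).2 (hsum r a b)
  have S2 := fun r a b => (summable_nat_add_iff 2).2 (hsum r a b)
  have key : (∑' n, e (n + 2) * s ^ (n + 2)) - (q + q ^ 2) * s * (∑' n, e (n + 1) * s ^ (n + 1))
      + q ^ 3 * s ^ 2 * ∑' n, e n * s ^ n =
      (∑' n, e (n + 2) * (q ^ 2 * s) ^ (n + 2))
      + 2 * q * s * (∑' n, e (n + 1) * (q ^ 2 * s) ^ (n + 1))
      + q ^ 2 * s ^ 2 * ∑' n, e n * (q ^ 2 * s) ^ n := by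
    have L := (((S2 s hs0 hs1).hasSum.sub ((S1 s hs0 hs1).hasSum.mul_left ((q + q ^ 2) * s))).add
      ((S0 s hs0 hs1).hasSum.mul_left (q ^ 3 * s ^ 2)))
    have R := (((S2 _ hr0 hr1).hasSum.add ((S1 _ hr0 hr1).hasSum.mul_left (2 * q * s))).add
      ((S0 _ hr0 hr1).hasSum.mul_left (q ^ 2 * s ^ 2)))
    refine L.unique ?_
    convert R using 2 with n
    have := h2 n
    have e4 : q ^ (2 * n + 4) = (q ^ 2) ^ n * q ^ 4 := by rw [pow_add, pow_mul]
    have e3 : q ^ (2 * n + 3) = (q ^ 2) ^ n * q ^ 3 := by rw [pow_add, pow_mul]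
    have e2 : q ^ (2 * n + 2) = (q ^ 2) ^ n * q ^ 2 := by rw [pow_add, pow_mul]
    rw [e4, e3, e2] at this
    simp only [mul_pow, pow_succ] at this ⊢
    linear_combination s ^ n * s * s * this
  have a1 := split1 s hs0 hs1
  have a2 := split2 s hs0 hs1
  have b1 := split1 _ hr0 hr1
  have b2 := split2 _ hr0 hr1
  linear_combination key + a2 - (q + q ^ 2) * s * a1 - b2 - 2 * q * s * b1 + s * h1

/-- The limit of the transfer recursion. After rescaling `al m` by `∏ k < m, (1 - q ^ (2 k + 1))`,
the increments are the coefficients of a function `h` satisfying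
`(1 - q s) (1 - q² s) h(s) = (1 + q s)² h(q² s)`, so that `h 1`, the limit of the rescaled sequence,
is an infinite product. -/
lemma tendsto_of_rec {q : ℝ} (hq0 : 0 < q) (hq1 : q < 1) {al be : ℕ → ℝ} (al0 : al 0 = 1)
    (be0 : be 0 = 0) (hal : ∀ m, 0 ≤ al m) (hbe : ∀ m, 0 ≤ be m)
    (r1 : ∀ m, (1 - q ^ (2 * m + 1)) * be (m + 1) = 4 * q ^ (2 * m + 1) * al m + q * be m)
    (r2 : ∀ m, (1 - q ^ (2 * m + 2)) * al (m + 1) = be (m + 1) + al m) :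
    Monotone al ∧ Tendsto al atTop (𝓝 ((∏' k : ℕ, (1 + q ^ (2 * k + 1))) ^ 2 *
      (∏' k : ℕ, (1 - q ^ (2 * k + 2))) / (∏' k : ℕ, (1 - q ^ (1 * k + 1))) ^ 2)) := by
  have hlt : ∀ n : ℕ, q ^ (n + 1) < 1 := fun n => pow_lt_one₀ hq0.le hq1 (by omega)
  have hpos : ∀ n : ℕ, 0 < q ^ n := fun n => pow_pos hq0 n
  have hmono : Monotone al := monotone_nat_of_le_succ fun m => by
    have := mul_nonneg (hpos (2 * m + 2)).le (hal (m + 1))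
    linarith [r2 m, hbe (m + 1)]
  refine ⟨hmono, ?_⟩
  set P : ℕ → ℝ := fun n => ∏ k ∈ Finset.range n, (1 - q ^ (1 * k + 1)) with hP
  set D : ℕ → ℝ := fun n => ∏ k ∈ Finset.range n, (1 - q ^ (2 * k + 1)) with hD
  set E : ℕ → ℝ := fun n => ∏ k ∈ Finset.range n, (1 - q ^ (2 * k + 2)) with hE
  set X : ℕ → ℝ := fun n => ∏ k ∈ Finset.range n, (1 + q ^ (2 * k + 1)) with hX
  have P_lim := (multipliable_one_sub hq0 hq1 1 1 (by simp)).tendsto_prod_tprod_nat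
  have D_lim := (multipliable_one_sub hq0 hq1 2 1 (by simp)).tendsto_prod_tprod_nat
  have E_lim := (multipliable_one_sub hq0 hq1 2 2 (by simp)).tendsto_prod_tprod_nat
  have X_lim := (Real.multipliable_one_add_of_summable
    (summable_pow_affine hq0 hq1 2 1 (by simp))).tendsto_prod_tprod_nat
  have P_ne := tprod_one_sub_ne_zero hq0 hq1 1 1 (by simp) (by simp)
  have D_ne := tprod_one_sub_ne_zero hq0 hq1 2 1 (by simp) (by simp)
  set P' := ∏' k : ℕ, (1 - q ^ (1 * k + 1))
  set D' := ∏' k : ℕ, (1 - q ^ (2 * k + 1))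
  set E' := ∏' k : ℕ, (1 - q ^ (2 * k + 2))
  set X' := ∏' k : ℕ, (1 + q ^ (2 * k + 1))
  have D_succ : ∀ m, D (m + 1) = D m * (1 - q ^ (2 * m + 1)) := fun m =>
    Finset.prod_range_succ _ _
  have X_succ : ∀ m, X (m + 1) = X m * (1 + q ^ (2 * m + 1)) := fun m =>
    Finset.prod_range_succ _ _
  have P_succ : ∀ m, P (m + 1) = P m * (1 - q ^ (m + 1)) := fun m => by
    have h := Finset.prod_range_succ (fun k => 1 - q ^ (1 * k + 1)) m
    rwa [one_mul] at h
  have P_succ2 : ∀ m, P (2 * (m + 1)) = P (2 * m) * ((1 - q ^ (2 * m + 1)) *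
      (1 - q ^ (2 * m + 2))) := fun m => by
    rw [mul_add, mul_one, P_succ, P_succ]; ring
  have DE : ∀ m, D m * E m = P (2 * m) := by
    intro m
    induction m with
    | zero => simp [hD, hE, hP]
    | succ m ih =>
      rw [P_succ2, ← ih, D_succ, show E (m + 1) = E m * (1 - q ^ (2 * m + 2)) from
        Finset.prod_range_succ _ _]
      ring
  have P2_lim : Tendsto (fun m => P (2 * m)) atTop (𝓝 P') :=
    P_lim.comp (tendsto_id.const_mul_atTop' (by norm_num : 0 < 2))
  have DE' : D' * E' = P' :=
    tendsto_nhds_unique ((D_lim.mul E_lim).congr DE) P2_lim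
  have P_pos : ∀ m, 0 < P m := fun m => Finset.prod_pos fun k _ => by
    have := hlt (1 * k); linarith
  have P_anti : Antitone P := antitone_nat_of_succ_le fun m => by
    rw [P_succ]; nlinarith [mul_pos (P_pos m) (hpos (m + 1))]
  have P'_pos : 0 < P' :=
    lt_of_le_of_ne (ge_of_tendsto' P_lim fun m => (P_pos m).le) P_ne.symm
  have D_pos : ∀ m, 0 < D m := fun m => Finset.prod_pos fun k _ => by
    have := hlt (2 * k); linarith
  have D_le : ∀ m, D m ≤ 1 := fun m => Finset.prod_le_one
    (fun k _ => by have := hlt (2 * k); linarith) fun k _ => by have := hpos (2 * k + 1); linarith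
  -- `al` is bounded: `((1 - q) * al m + q * be m) * P (2 * m)` grows at most like a convergent
  -- product.
  obtain ⟨K, hK⟩ : ∃ K, ∀ m, al m ≤ K := by
    set C := 4 / (1 - q) with hC
    have h1q : 0 < 1 - q := by linarith
    have hC0 : 0 < C := by positivity
    have Y_lim := (Real.multipliable_one_add_of_summable
      ((summable_pow_affine hq0 hq1 2 1 (by simp)).mul_left C)).tendsto_prod_tprod_nat
    obtain ⟨K, hK⟩ := Y_lim.bddAbove_range
    have hV : ∀ m, ((1 - q) * al m + q * be m) * P (2 * m) ≤
        ∏ k ∈ Finset.range m, (1 + C * q ^ (2 * k + 1)) := by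
      intro m
      induction m with
      | zero => simp [al0, be0, hP]; linarith
      | succ m ih =>
        rw [Finset.prod_range_succ, P_succ2]
        have hx0 := hpos (2 * m + 1)
        have hx1 := hlt (2 * m)
        have hy : q ^ (2 * m + 2) = q * q ^ (2 * m + 1) := by ring
        have r1' := r1 m
        have r2' := r2 m
        rw [hy] at r2' ⊢
        set x := q ^ (2 * m + 1)
        have step : ((1 - q) * al (m + 1) + q * be (m + 1)) * ((1 - x) * (1 - q * x)) ≤
            ((1 - q) * al m + q * be m) * (1 + C * x) := by
          have e1 : ((1 - q) * al (m + 1) + q * be (m + 1)) * ((1 - x) * (1 - q * x)) =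
              (1 - q) * al m + q * be m + 4 * x * al m - (1 - q) * x * al m
                - q * (q * x) * ((1 - x) * be (m + 1)) := by
            linear_combination (1 - q) * (1 - x) * r2' + r1'
          have e2 : ((1 - q) * al m + q * be m) * (1 + C * x) =
              (1 - q) * al m + q * be m + 4 * x * al m + C * q * x * be m := by
            rw [hC]; field_simp; ring
          rw [e1, e2]
          have t1 : 0 ≤ (1 - q) * x * al m := by have := hal m; positivity
          have t2 : 0 ≤ q * (q * x) * ((1 - x) * be (m + 1)) := by
            have := hbe (m + 1)
            have : 0 < 1 - x := by linarith
            positivity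
          have t3 : 0 ≤ C * q * x * be m := by have := hbe m; positivity
          linarith
        calc _ = P (2 * m) * (((1 - q) * al (m + 1) + q * be (m + 1)) *
                ((1 - x) * (1 - q * x))) := by ring
          _ ≤ P (2 * m) * (((1 - q) * al m + q * be m) * (1 + C * x)) :=
              mul_le_mul_of_nonneg_left step (P_pos _).le
          _ = (((1 - q) * al m + q * be m) * P (2 * m)) * (1 + C * x) := by ring
          _ ≤ _ := mul_le_mul_of_nonneg_right ih (by positivity)
    refine ⟨K / ((1 - q) * P'), fun m => ?_⟩
    rw [le_div_iff₀ (by positivity)]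
    have a1 := (hV m).trans (hK ⟨m, rfl⟩)
    have a2 : P' ≤ P (2 * m) := P_anti.le_of_tendsto P_lim _
    have a3 : 0 ≤ q * be m * P (2 * m) := by
      have := hbe m; have := P_pos (2 * m); positivity
    have a4 : al m * (1 - q) * P' ≤ al m * (1 - q) * P (2 * m) :=
      mul_le_mul_of_nonneg_left a2 (mul_nonneg (hal m) h1q.le)
    linarith
  have K0 : 0 ≤ K := (hal 0).trans (hK 0)
  -- The rescaled sequence `d` and its increments `e`.
  set d : ℕ → ℝ := fun m => al m * D m with hd
  have d0 : d 0 = 1 := by simp [hd, hD, al0]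
  have d1 : (1 - q ^ 2) * d 1 = (1 + 3 * q) * d 0 := by
    have a1 := r1 0
    have a2 := r2 0
    simp only [mul_zero, zero_add, pow_one, be0, al0] at a1 a2
    simp only [hd, hD, al0]
    simp
    linear_combination (1 - q) * a2 + a1
  have d2 : ∀ m, (1 - q ^ (2 * m + 4)) * d (m + 2) =
      (1 + q + 2 * q ^ (2 * m + 3)) * d (m + 1) - (q - q ^ (2 * m + 2)) * d m := by
    intro m
    have a1 := r1 (m + 1)
    have a2 := r2 (m + 1)
    have a3 := r2 m
    simp only [hd, D_succ]
    ring_nf at a1 a2 a3 ⊢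
    linear_combination (1 - q * q ^ (m * 2)) * D m * ((1 - q ^ 3 * q ^ (m * 2)) * a2 + a1 - q * a3)
  set e : ℕ → ℝ := fun n => if n = 0 then 1 else d n - d (n - 1) with he
  have e_zero : e 0 = 1 := by simp [he]
  have e_succ : ∀ n, e (n + 1) = d (n + 1) - d n := fun n => by simp [he]
  have e_sum : ∀ n, ∑ k ∈ Finset.range (n + 1), e k = d n := by
    intro n
    induction n with
    | zero => simp [e_zero, d0]
    | succ n ih => rw [Finset.sum_range_succ, ih, e_succ]; ring
  have e_summable : Summable e := by
    rw [← summable_nat_add_iff 1]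
    have s1 : Summable fun n => al (n + 1) - al n := by
      refine summable_of_sum_range_le (c := K) (fun n => sub_nonneg.2 (hmono n.le_succ)) fun n => ?_
      rw [Finset.sum_range_sub]
      linarith [hK n, hal 0]
    have s2 := (summable_pow_affine hq0 hq1 2 1 (by simp)).mul_left K
    refine Summable.of_norm_bounded (s1.add s2) fun n => ?_
    have x0 := hpos (2 * n + 1)
    have : e (n + 1) = (al (n + 1) - al n) * D (n + 1) - al n * D n * q ^ (2 * n + 1) := by
      rw [e_succ]; simp only [hd, D_succ]; ring
    rw [this]
    refine (norm_sub_le _ _).trans (add_le_add ?_ ?_)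
    · have h0 : 0 ≤ al (n + 1) - al n := sub_nonneg.2 (hmono n.le_succ)
      rw [Real.norm_of_nonneg (mul_nonneg h0 (D_pos _).le)]
      exact mul_le_of_le_one_right h0 (D_le _)
    · rw [Real.norm_of_nonneg (mul_nonneg (mul_nonneg (hal n) (D_pos _).le) x0.le)]
      refine mul_le_mul_of_nonneg_right ?_ x0.le
      exact (mul_le_of_le_one_right (hal n) (D_le _)).trans (hK n)
  have e1 : (1 - q ^ 2) * e 1 = (3 * q + q ^ 2) * e 0 := by
    rw [e_succ 0, e_zero]; linear_combination d1 + (3 * q + q ^ 2) * d0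
  have e2 : ∀ n, (1 - q ^ (2 * n + 4)) * e (n + 2) =
      (q + q ^ 2 + 2 * q ^ (2 * n + 3)) * e (n + 1) - (q ^ 3 - q ^ (2 * n + 2)) * e n := by
    intro n
    rcases n with _ | n
    · have a := d2 0
      rw [e_succ, e_succ, e_zero]
      simp only [mul_zero, zero_add] at a ⊢
      linear_combination a - q ^ 2 * d1 + (q ^ 2 - q ^ 3) * d0
    · have a := d2 (n + 1)
      have b := d2 n
      rw [e_succ, e_succ, e_succ]
      ring_nf at a b ⊢
      linear_combination a - q ^ 2 * b
  have d_lim : Tendsto d atTop (𝓝 (∑' n, e n)) :=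
    ((e_summable.hasSum.tendsto_sum_nat).comp (tendsto_add_atTop_nat 1)).congr e_sum
  -- Iterating the functional equation from `s = 1`.
  have iter : ∀ N, P (2 * N) * ∑' n, e n = X N ^ 2 * ∑' n, e n * (q ^ (2 * N)) ^ n := by
    intro N
    induction N with
    | zero => simp [hP, hX]
    | succ N ih =>
      have f := tsum_functional_eq hq0 hq1 (hpos (2 * N)).le (pow_le_one₀ hq0.le hq1.le)
        e_summable e1 e2
      have c : q ^ 2 * q ^ (2 * N) = q ^ (2 * (N + 1)) := by ring
      rw [c] at f
      rw [P_succ2, X_succ]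
      have c1 : q ^ (2 * N + 1) = q * q ^ (2 * N) := by ring
      have c2 : q ^ (2 * N + 2) = q ^ 2 * q ^ (2 * N) := by ring
      rw [c1, c2]
      linear_combination (1 - q * q ^ (2 * N)) * (1 - q ^ 2 * q ^ (2 * N)) * ih + X N ^ 2 * f
  have h_lim : Tendsto (fun N : ℕ => ∑' n, e n * (q ^ (2 * N)) ^ n) atTop (𝓝 1) := by
    have hz : ∑' n, (if n = 0 then (1 : ℝ) else 0) = 1 := tsum_ite_eq 0 _
    rw [← hz]
    refine tendsto_tsum_of_dominated_convergence (bound := fun n => |e n|) e_summable.abs ?_ ?_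
    · intro n
      rcases n with _ | n
      · simp [e_zero]
      · have t : Tendsto (fun N : ℕ => q ^ (2 * N)) atTop (𝓝 0) := by
          simpa only [pow_mul] using tendsto_pow_atTop_nhds_zero_of_lt_one (hpos 2).le (hlt 1)
        simpa using (t.pow (n + 1)).const_mul (e (n + 1))
    · refine Eventually.of_forall fun N n => ?_
      rw [norm_mul, norm_pow, Real.norm_eq_abs, Real.norm_of_nonneg (hpos _).le]
      exact mul_le_of_le_one_right (abs_nonneg _)
        (pow_le_one₀ (hpos _).le (pow_le_one₀ hq0.le hq1.le))
  have val : P' * ∑' n, e n = X' ^ 2 * 1 :=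
    tendsto_nhds_unique ((P2_lim.mul_const _).congr iter) ((X_lim.pow 2).mul h_lim)
  have al_lim := d_lim.div D_lim D_ne
  have : X' ^ 2 * E' / P' ^ 2 = (∑' n, e n) / D' := by
    rw [div_eq_div_iff (pow_ne_zero _ P_ne) D_ne]
    linear_combination X' ^ 2 * DE' - P' * val
  rw [this]
  refine al_lim.congr fun m => ?_
  exact mul_div_cancel_right₀ _ (D_pos m).ne'

/-- The transfer recursion over two steps, for the sequences `al m = (partFun q (2 * m)).1` and
`be m = 4 * q ^ (2 * m) * (partFun q (2 * m)).2`; for `m ≥ 1` the latter equals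
`(partFun q (2 * m - 1)).1`. -/
lemma partFun_rec {q : ℝ} (hq0 : 0 < q) (hq1 : q < 1) (m : ℕ) :
    (1 - q ^ (2 * m + 1)) * (4 * q ^ (2 * (m + 1)) * (partFun q (2 * (m + 1))).2) =
      4 * q ^ (2 * m + 1) * (partFun q (2 * m)).1 + q * (4 * q ^ (2 * m) * (partFun q (2 * m)).2) ∧
    (1 - q ^ (2 * m + 2)) * (partFun q (2 * (m + 1))).1 =
      4 * q ^ (2 * (m + 1)) * (partFun q (2 * (m + 1))).2 + (partFun q (2 * m)).1 := by
  have n1 : 1 - q ^ (2 * m + 1) ≠ 0 :=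
    (sub_pos.2 (pow_lt_one₀ hq0.le hq1 (by omega))).ne'
  have n2 : 1 - q ^ (2 * m + 2) ≠ 0 :=
    (sub_pos.2 (pow_lt_one₀ hq0.le hq1 (by omega))).ne'
  have hw1 : posWeight q (2 * m) = 4 * q ^ (2 * m + 1) / (1 - q ^ (2 * m + 1)) := by
    simp [posWeight]
  have hw2 : posWeight q (2 * m + 1) = 1 / (1 - q ^ (2 * m + 2)) := by
    rw [posWeight, if_neg (by omega)]
  have hz1 : entryWeight q (2 * m) 0 = 1 := by simp [entryWeight]
  have hz2 : 4 * q ^ (2 * m + 2) * entryWeight q (2 * m + 1) 0 = 1 := by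
    rw [entryWeight, if_neg (by omega), if_pos rfl]
    have : q ^ ((((2 * m + 1 : ℕ) : ℤ) + 1) * (((0 : ℕ) : ℤ) - 1)) = (q ^ (2 * m + 2))⁻¹ := by
      rw [← zpow_natCast, ← zpow_neg]
      congr 1
      push_cast
      ring
    rw [this]
    have := (pow_pos hq0 (2 * m + 2)).ne'
    field_simp
  have hp : (1 - q ^ (2 * m + 1)) * posWeight q (2 * m) = 4 * q ^ (2 * m + 1) := by
    rw [hw1]; field_simp
  have hp2 : (1 - q ^ (2 * m + 2)) * posWeight q (2 * m + 1) = 1 := by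
    rw [hw2]; field_simp
  have c : 2 * (m + 1) = 2 * m + 1 + 1 := by ring
  simp only [c, partFun, hz1, one_mul]
  set p := (partFun q (2 * m)).1
  set z := (partFun q (2 * m)).2
  have c2 : q ^ (2 * m + 1) = q * q ^ (2 * m) := by ring
  constructor
  · linear_combination (1 - q ^ (2 * m + 1)) * posWeight q (2 * m) * (p + z) * hz2 +
      (p + z) * hp + 4 * z * c2
  · linear_combination (posWeight q (2 * m) * (p + z) + p) * hp2 -
      posWeight q (2 * m) * (p + z) * hz2

theorem statement9 (q : ℝ) (hq0 : 0 < q) (hq1 : q < 1) :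
    Multipliable (fun i : ℕ => (1 + q ^ (2 * i + 1)) ^ 2 * (1 + q ^ (i + 1)) / (1 - q ^ (i + 1))) ∧
    Seven q 2 = ∏' i : ℕ, (1 + q ^ (2 * i + 1)) ^ 2 * (1 + q ^ (i + 1)) / (1 - q ^ (i + 1)) := by
  have hP := multipliable_one_sub hq0 hq1 1 1 (by simp)
  have hE := multipliable_one_sub hq0 hq1 2 2 (by simp)
  have hX := Real.multipliable_one_add_of_summable (summable_pow_affine hq0 hq1 2 1 (by simp))
  have P_ne := tprod_one_sub_ne_zero hq0 hq1 1 1 (by simp) (by simp)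
  have hprod := ((hX.hasProd.mul hX.hasProd).mul hE.hasProd).div₀
    (hP.hasProd.mul hP.hasProd) (mul_ne_zero P_ne P_ne)
  have hfun : (fun i : ℕ => (1 + q ^ (2 * i + 1)) ^ 2 * (1 + q ^ (i + 1)) / (1 - q ^ (i + 1))) =
      fun i : ℕ => (1 + q ^ (2 * i + 1)) * (1 + q ^ (2 * i + 1)) * (1 - q ^ (2 * i + 2)) /
        ((1 - q ^ (1 * i + 1)) * (1 - q ^ (1 * i + 1))) := by
    funext i
    have hne : 1 - q ^ (i + 1) ≠ 0 := (sub_pos.2 (pow_lt_one₀ hq0.le hq1 (by omega))).ne'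
    have hsq : q ^ (2 * i + 2) = (q ^ (i + 1)) ^ 2 := by ring
    rw [one_mul, hsq]
    field_simp
    ring
  rw [hfun]
  refine ⟨hprod.multipliable, ?_⟩
  rw [hprod.tprod_eq]
  obtain ⟨hmono, hlim⟩ := tendsto_of_rec hq0 hq1 (al := fun m => (partFun q (2 * m)).1)
    (be := fun m => 4 * q ^ (2 * m) * (partFun q (2 * m)).2) (by simp [partFun])
    (by simp [partFun]) (fun m => (partFun_nonneg hq0 hq1 _).1)
    (fun m => mul_nonneg (by positivity) (partFun_nonneg hq0 hq1 _).2)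
    (fun m => (partFun_rec hq0 hq1 m).1) (fun m => (partFun_rec hq0 hq1 m).2)
  rw [Seven_eq_of_tendsto hq0 hq1 hmono hlim, sq, sq]
end

section
/- For all real numbers q, z with 0 < q < 1 and z > 0, one has 2·S_even(q,1)·Σ_{ℓ∈ℤ} q^{ℓ(ℓ+1)} z^{2ℓ} = Π_{i≥1} (1 + q^{i}z + q^{2i}z²)(1 + q^{i−1}z⁻¹ + q^{2(i−1)}z⁻²) + Π_{i≥1} (1 − q^{i}z + q^{2i}z²)(1 − q^{i−1}z⁻¹ + q^{2(i−1)}z⁻²), where the sum over ℓ and the infinite products converge absolutely. -/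
/-!
Both infinite products are generating functions of the 2-exclusion process on `ℤ`. A state places
`0`, `1` or `2` particles on each site and differs from the ground state (two particles on every
site `i ≥ 0`, none elsewhere) at finitely many sites. Expanding `∏ (1 + w i + w i ^ 2)` over the
choices at each site turns the product into the sum over all states of
`q ^ energy * z ^ charge` (`hasSum_state`), and adding the product with `z` replaced by `-z` keeps
twice the states of even charge.

Reading a state from left to right as a list of particle positions `x 0 ≤ x 1 ≤ …` and recording
the gaps `ω k = x (k + 1) - x k` gives a sequence without two consecutive zeros, as no site holds
three particles; far to the right the gaps are those of the ground state, `0, 1, 0, 1, …`, when the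
charge is even. The gaps determine the state up to translation, so the states of even charge are in
bijection with `ℤ × He` (`exists_equiv`); the bijection is set up through the Galois-type relation
`x k ≤ m ↔ k < #{particles at sites ≤ m}`. Summation by parts shows that the state with shift `l`
and gaps `ω` has charge `2 l` and energy `l (l + 1) + A(ω)` (`Rel.charge`, `Rel.energy`). Hence the
sum over the states of even charge factors as the theta series times `S_even(q, 1)`.
-/

open scoped BigOperators

namespace TwoExclusion

open Finset

/-! ### States of the 2-exclusion process -/

/-- The charge of a deviation at site `i`: a hole (`i ≥ 0`) counts `1`, a particle (`i < 0`)
counts `-1`. -/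
def sgn (i : ℤ) : ℤ := if 0 ≤ i then 1 else -1

/-- The sum of `f` over the deviations of the state `(S, T)` located at sites `≤ m`; a site in `T`
is counted twice. -/
def part (S T : Finset ℤ) (f : ℤ → ℤ) (m : ℤ) : ℤ :=
  ∑ i ∈ S with i ≤ m, f i + ∑ i ∈ T with i ≤ m, f i

/-- The number of deviations from the ground state at site `i` (a value in `{0, 1, 2}`): missing
particles if `i ≥ 0`, present particles if `i < 0`. -/
def dev (S T : Finset ℤ) (i : ℤ) : ℤ := (if i ∈ S then 1 else 0) + (if i ∈ T then 1 else 0)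

/-- The number of particles of the state `(S, T)` at sites `≤ m`, in closed form: the number
`2 (m + 1)⁺` for the ground state, corrected by the charge of the deviations. It is kept
integer-valued; see `count_nonneg`. -/
def count (S T : Finset ℤ) (m : ℤ) : ℤ := 2 * max (m + 1) 0 - part S T sgn m

lemma sum_filter_succ (S : Finset ℤ) (f : ℤ → ℤ) (m : ℤ) :
    ∑ i ∈ S with i ≤ m + 1, f i =
      ∑ i ∈ S with i ≤ m, f i + f (m + 1) * (if m + 1 ∈ S then 1 else 0) := by
  have h : (if m + 1 ∈ S then (1 : ℤ) else 0) * f (m + 1)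
      = ∑ i ∈ S, if i = m + 1 then f i else 0 := by
    rw [Finset.sum_ite_eq']; split_ifs <;> simp
  rw [mul_comm (f (m + 1)), h, Finset.sum_filter, Finset.sum_filter, ← Finset.sum_add_distrib]
  refine Finset.sum_congr rfl fun i _ => ?_
  rcases lt_trichotomy i (m + 1) with h | h | h
  · simp [h.le, h.ne, show i ≤ m by omega]
  · simp [h]
  · simp [h.ne', show ¬ i ≤ m by omega, show ¬ i ≤ m + 1 by omega]

lemma part_succ (S T : Finset ℤ) (f : ℤ → ℤ) (m : ℤ) :
    part S T f (m + 1) = part S T f m + f (m + 1) * dev S T (m + 1) := by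
  simp only [part, dev, sum_filter_succ]; ring

lemma exists_bound (S : Finset ℤ) : ∃ L : ℕ, ∀ i ∈ S, -(L : ℤ) < i ∧ i ≤ L := by
  refine ⟨∑ i ∈ S, i.natAbs + 1, fun i hi => ?_⟩
  have : i.natAbs ≤ ∑ i ∈ S, i.natAbs :=
    Finset.single_le_sum (f := fun i : ℤ => i.natAbs) (fun _ _ => Nat.zero_le _) hi
  constructor <;> omega

lemma exists_part_bound (S T : Finset ℤ) : ∃ L : ℕ, (∀ f, ∀ m ≤ -(L : ℤ), part S T f m = 0) ∧
    ∀ f, ∀ m ≥ (L : ℤ), part S T f m = ∑ i ∈ S, f i + ∑ i ∈ T, f i := by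
  obtain ⟨L, hL⟩ := exists_bound (S ∪ T)
  refine ⟨L, fun f m hm => ?_, fun f m hm => ?_⟩
  · rw [part, Finset.filter_false_of_mem, Finset.filter_false_of_mem]
    · simp
    · intro i hi; have := hL i (by simp [hi]); omega
    · intro i hi; have := hL i (by simp [hi]); omega
  · rw [part, Finset.filter_true_of_mem, Finset.filter_true_of_mem]
    · intro i hi; have := hL i (by simp [hi]); omega
    · intro i hi; have := hL i (by simp [hi]); omega

lemma count_succ (S T : Finset ℤ) (m : ℤ) :
    count S T (m + 1) = count S T m +
      (if 0 ≤ m + 1 then 2 - dev S T (m + 1) else dev S T (m + 1)) := by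
  rw [count, count, part_succ, sgn]
  split_ifs with h
  · rw [max_eq_left (by omega), max_eq_left (by omega)]; ring
  · rw [max_eq_right (by omega), max_eq_right (by omega)]; ring

lemma dev_mem (S T : Finset ℤ) (i : ℤ) : 0 ≤ dev S T i ∧ dev S T i ≤ 2 := by
  unfold dev; split_ifs <;> norm_num

lemma count_step (S T : Finset ℤ) (m : ℤ) :
    count S T m ≤ count S T (m + 1) ∧ count S T (m + 1) ≤ count S T m + 2 := by
  rw [count_succ]; have := dev_mem S T (m + 1); split_ifs <;> omega

lemma count_mono (S T : Finset ℤ) : Monotone (count S T) :=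
  monotone_int_of_le_succ fun m => (count_step S T m).1

lemma exists_count_bound (S T : Finset ℤ) : ∃ L : ℕ, (∀ m ≤ -(L : ℤ), count S T m = 0) ∧
    ∀ m ≥ (L : ℤ), count S T m = 2 * (m + 1) - (∑ i ∈ S, sgn i + ∑ i ∈ T, sgn i) := by
  obtain ⟨L, h1, h2⟩ := exists_part_bound S T
  refine ⟨L + 1, fun m hm => ?_, fun m hm => ?_⟩ <;> push_cast at hm
  · rw [count, h1 _ _ (by omega), max_eq_right (by omega)]; simp
  · rw [count, h2 _ _ (by omega), max_eq_left (by omega)]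

lemma count_nonneg (S T : Finset ℤ) (m : ℤ) : 0 ≤ count S T m := by
  obtain ⟨L, h, -⟩ := exists_count_bound S T
  rw [← h (min m (-L)) (min_le_right _ _)]
  exact count_mono S T (min_le_left _ _)

/-- Induction from `-∞`: equality far to the left propagates to all of `ℤ`. -/
lemma eq_of_succ {f g : ℤ → ℤ} (L : ℤ) (h0 : ∀ m ≤ L, f m = g m)
    (h : ∀ m, f m = g m → f (m + 1) = g (m + 1)) : ∀ m, f m = g m := by
  intro m
  rcases le_total m L with hm | hm
  · exact h0 m hm
  · exact Int.leInduction (h0 L le_rfl) (fun n _ hn => h n hn) m hm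

lemma sum_sgn_parity (S : Finset ℤ) : ∃ c : ℤ, ∑ i ∈ S, sgn i = #S + 2 * c := by
  refine ⟨∑ i ∈ S, (if 0 ≤ i then 0 else -1), ?_⟩
  rw [Finset.card_eq_sum_ones, Finset.mul_sum]; push_cast
  rw [← Finset.sum_add_distrib]
  refine Finset.sum_congr rfl fun i _ => ?_
  unfold sgn; split_ifs <;> norm_num

/-! ### The correspondence between states and pairs of a shift and a sequence -/

/-- The state `(S, T)` corresponds to the shift `l` and the gap sequence `ω`: listing the particles
from left to right at positions `x 0 ≤ x 1 ≤ …`, consecutive gaps are given by `ω`, far particles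
sit at their ground-state position `k / 2` translated by `l`, and `x` is the generalised inverse of
the counting function of `(S, T)`. -/
def Rel (S T : Finset ℤ) (l : ℤ) (ω : ℕ → ℕ) : Prop :=
  ∃ x : ℕ → ℤ, (∀ k, x (k + 1) = x k + ω k) ∧ (∃ N, ∀ k ≥ N, x k = l + (k / 2 : ℕ)) ∧
    ∀ k m, x k ≤ m ↔ (k : ℤ) < count S T m

/-- A state corresponding to the shift `l` has total charge `2 l`. -/
lemma Rel.charge {S T : Finset ℤ} {l : ℤ} {ω : ℕ → ℕ} (h : Rel S T l ω) :
    ∑ i ∈ S, sgn i + ∑ i ∈ T, sgn i = 2 * l := by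
  obtain ⟨x, -, ⟨N, hN⟩, hx⟩ := h
  obtain ⟨L, -, hL⟩ := exists_count_bound S T
  set c := ∑ i ∈ S, sgn i + ∑ i ∈ T, sgn i
  -- far to the right, site `m` holds the particles `2 n` and `2 n + 1` with `n = m - l`
  obtain ⟨m, hm⟩ : ∃ m : ℤ, m = L + N + |l| + |c| := ⟨_, rfl⟩
  have a1 := le_abs_self l
  have a2 := neg_le_abs l
  have a3 := le_abs_self c
  have a4 := neg_le_abs c
  have hc := hL m (by omega)
  obtain ⟨n, hn⟩ : ∃ n : ℕ, (n : ℤ) = m - l := ⟨(m - l).toNat, by omega⟩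
  have e1 := hx (2 * n + 1)
  have e2 := hx (2 * n + 2)
  rw [hN _ (by omega)] at e1
  rw [hN _ (by omega)] at e2
  have h1 := (e1 m).1 (by omega)
  have h2 := mt (e2 m).2 (by omega)
  push_cast at h1 h2
  omega

/-- Every state of even charge has a gap sequence in `He`. At most two particles per site means
`x k < x (k + 2)`, i.e. no two consecutive gaps vanish. -/
lemma exists_of_state (S T : Finset ℤ) (he : Even (#S + #T)) :
    ∃ l, ∃ ω ∈ He, Rel S T l ω := by
  obtain ⟨c, hc⟩ := sum_sgn_parity S
  obtain ⟨d, hd⟩ := sum_sgn_parity T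
  obtain ⟨r, hr⟩ := he
  obtain ⟨L, h1, h2⟩ := exists_count_bound S T
  obtain ⟨l, hl⟩ : ∃ l : ℤ, ∑ i ∈ S, sgn i + ∑ i ∈ T, sgn i = 2 * l :=
    ⟨r + c + d, by rw [hc, hd]; omega⟩
  rw [hl] at h2
  have hex : ∀ k : ℕ, ∃ j : ℤ, (k : ℤ) < count S T j ∧ ∀ z, (k : ℤ) < count S T z → j ≤ z := by
    intro k
    refine Int.exists_least_of_bdd ⟨-L, fun z hz => ?_⟩ ⟨L + |l| + k, ?_⟩
    · by_contra hlt
      rw [h1 z (by omega)] at hz; omega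
    · have a1 := le_abs_self l
      have a2 := abs_nonneg l
      rw [h2 _ (by omega)]; omega
  choose x hx1 hx2 using hex
  have hx : ∀ k m, x k ≤ m ↔ (k : ℤ) < count S T m := fun k m =>
    ⟨fun h => (hx1 k).trans_le (count_mono S T h), hx2 k m⟩
  have hmono : ∀ k, x k ≤ x (k + 1) := fun k =>
    (hx k _).2 (by have := hx1 (k + 1); push_cast at this; omega)
  have hstrict : ∀ k, x k < x (k + 2) := by
    intro k
    by_contra hlt
    have h3 := (hx (k + 2) _).1 (not_lt.1 hlt)
    have h4 := (count_step S T (x k - 1)).2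
    have h5 := mt (hx k (x k - 1)).2 (by omega)
    rw [sub_add_cancel] at h4
    push_cast at h3
    omega
  have htail : ∃ N : ℕ, ∀ k ≥ N, x k = l + (k / 2 : ℕ) := by
    refine ⟨(count S T L).toNat, fun k hk => ?_⟩
    have hL : ¬ x k ≤ L := by rw [hx]; omega
    have e1 := hx k (x k)
    have e2 := hx k (x k - 1)
    rw [h2 _ (by omega)] at e1
    rw [h2 _ (by omega)] at e2
    have f1 := e1.1 le_rfl
    have f2 := mt e2.2 (by omega)
    omega
  refine ⟨l, fun k => (x (k + 1) - x k).toNat, ⟨fun n hn => ?_, ?_⟩, x, fun k => ?_, htail, hx⟩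
  · have := hmono n
    have := hmono (n + 1)
    have := hstrict n
    simp only [add_assoc, Nat.reduceAdd] at *
    omega
  · obtain ⟨N, hN⟩ := htail
    refine ⟨N, fun n hn => ?_⟩
    simp only
    rw [hN n hn, hN (n + 1) (by omega)]
    split_ifs <;> omega
  · have := hmono k
    simp only
    omega

/-- Every shift and every gap sequence in `He` come from a state. -/
lemma exists_of_seq (l : ℤ) {ω : ℕ → ℕ} (hω : ω ∈ He) :
    ∃ S T : Finset ℤ, T ⊆ S ∧ Rel S T l ω := by
  obtain ⟨h0, N, hN⟩ := hω
  obtain ⟨x, hx⟩ : ∃ x : ℕ → ℤ, ∀ k, x k = l + (N / 2 : ℕ) - ∑ i ∈ range N, (ω i : ℤ)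
      + ∑ i ∈ range k, (ω i : ℤ) := ⟨_, fun _ => rfl⟩
  have hs : ∀ k, x (k + 1) = x k + ω k := fun k => by
    rw [hx, hx, Finset.sum_range_succ]; ring
  have ht : ∀ k ≥ N, x k = l + (k / 2 : ℕ) := by
    intro k hk
    induction k, hk using Nat.le_induction with
    | base => rw [hx]; ring
    | succ n hn ih => rw [hs, ih, hN n hn]; split_ifs <;> omega
  have hmono : Monotone x := monotone_nat_of_le_succ fun k => by rw [hs]; omega
  have hstrict : ∀ k, x k + 1 ≤ x (k + 2) := fun k => by
    have := h0 k
    rw [hs, hs]; omega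
  have hex : ∀ m : ℤ, ∃ k, ¬ x k ≤ m := fun m => by
    refine ⟨N + 2 * (m - l + 1).toNat, ?_⟩
    rw [ht _ (by omega)]; omega
  classical
  obtain ⟨C, hC⟩ : ∃ C : ℤ → ℕ, ∀ k m, x k ≤ m ↔ k < C m := by
    refine ⟨fun m => Nat.find (hex m), fun k m => ?_⟩
    rw [Nat.lt_find_iff]
    exact ⟨fun h j hj => not_not.2 ((hmono hj).trans h), fun h => not_not.1 (h k le_rfl)⟩
  have hCmono : ∀ m, C m ≤ C (m + 1) := fun m => by
    by_contra hlt
    have h1 := (hC (C (m + 1)) m).2 (by omega)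
    have h2 := (hC (C (m + 1)) (m + 1)).1 (by omega)
    omega
  have hCstep : ∀ m, C (m + 1) ≤ C m + 2 := fun m => by
    by_contra hlt
    have h1 := (hC (C m + 2) (m + 1)).2 (by omega)
    have h2 := hstrict (C m)
    have h3 := (hC (C m) m).1 (by omega)
    omega
  have hClow : ∀ m < x 0, C m = 0 := fun m hm => by
    by_contra hne
    have := (hC 0 m).2 (by omega)
    omega
  have hChigh : ∀ m ≥ x N, (C m : ℤ) = 2 * (m + 1 - l) := fun m hm => by
    have h1 := (hC N m).1 hm
    have h2 : ¬ x (C m) ≤ m := by rw [hC]; omega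
    have h3 := (hC (C m - 1) m).2 (by omega)
    rw [ht _ (by omega)] at h2 h3
    omega
  -- deviation of the site occupation from the ground state
  obtain ⟨D, hD⟩ : ∃ D : ℤ → ℤ, ∀ j, D j =
      if 0 ≤ j then 2 - ((C j : ℤ) - C (j - 1)) else (C j : ℤ) - C (j - 1) := ⟨_, fun _ => rfl⟩
  have hDr : ∀ j, 0 ≤ D j ∧ D j ≤ 2 := fun j => by
    have h1 := hCmono (j - 1)
    have h2 := hCstep (j - 1)
    rw [sub_add_cancel] at h1 h2
    rw [hD]; split_ifs <;> omega
  have hDsupp : ∀ j, D j ≠ 0 → j ∈ Finset.Icc (-|x 0|) (|x N| + 1) := fun j hj => by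
    have a1 := neg_abs_le (x 0)
    have a2 := le_abs_self (x N)
    have a3 := abs_nonneg (x 0)
    have a4 := abs_nonneg (x N)
    rw [hD] at hj
    rw [Finset.mem_Icc]
    constructor
    · by_contra hlt
      rw [if_neg (by omega), hClow _ (by omega), hClow _ (by omega)] at hj
      simp at hj
    · by_contra hlt
      rw [if_pos (by omega), hChigh _ (by omega), hChigh _ (by omega)] at hj
      apply hj; ring
  refine ⟨{j ∈ Finset.Icc (-|x 0|) (|x N| + 1) | D j ≠ 0},
    {j ∈ Finset.Icc (-|x 0|) (|x N| + 1) | D j = 2}, ?_, x, hs, ⟨N, ht⟩, ?_⟩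
  · intro j hj
    rw [Finset.mem_filter] at hj ⊢
    exact ⟨hj.1, by omega⟩
  · set S : Finset ℤ := {j ∈ Finset.Icc (-|x 0|) (|x N| + 1) | D j ≠ 0}
    set T : Finset ℤ := {j ∈ Finset.Icc (-|x 0|) (|x N| + 1) | D j = 2}
    have hdev : ∀ j, dev S T j = D j := fun j => by
      have hS : j ∈ S ↔ D j ≠ 0 := by
        simp only [S, Finset.mem_filter]; exact ⟨fun h => h.2, fun h => ⟨hDsupp j h, h⟩⟩
      have hT : j ∈ T ↔ D j = 2 := by
        simp only [T, Finset.mem_filter]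
        exact ⟨fun h => h.2, fun h => ⟨hDsupp j (by omega), h⟩⟩
      have := hDr j
      simp only [dev, hS, hT]
      split_ifs <;> omega
    obtain ⟨L, hL, -⟩ := exists_count_bound S T
    have hcount : ∀ m, count S T m = C m := by
      refine eq_of_succ (min (-(L : ℤ)) (x 0 - 1)) (fun m hm => ?_) (fun m hm => ?_)
      · rw [hL m (by omega), hClow m (by omega)]; rfl
      · rw [count_succ, hdev, hm, hD, add_sub_cancel_right]
        split_ifs <;> ring
    intro k m
    rw [hcount, hC]; omega

lemma Rel.left_unique {S T S' T' : Finset ℤ} {l : ℤ} {ω : ℕ → ℕ} (hT : T ⊆ S) (hT' : T' ⊆ S')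
    (h : Rel S T l ω) (h' : Rel S' T' l ω) : S = S' ∧ T = T' := by
  obtain ⟨x, hs, ⟨N, hN⟩, hx⟩ := h
  obtain ⟨x', hs', ⟨N', hN'⟩, hx'⟩ := h'
  have hdiff : ∀ k, x k - x' k = x 0 - x' 0 := fun k => by
    induction k with
    | zero => rfl
    | succ n ih => rw [hs, hs', ← ih]; ring
  have hxx : ∀ k, x k = x' k := fun k => by
    have h1 := hdiff k
    have h2 := hdiff (N + N')
    rw [hN _ (by omega), hN' _ (by omega)] at h2
    omega
  have hc : ∀ m, count S T m = count S' T' m := fun m => by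
    have n1 := count_nonneg S T m
    have n2 := count_nonneg S' T' m
    have e : ∀ k : ℕ, (k : ℤ) < count S T m ↔ (k : ℤ) < count S' T' m := fun k => by
      rw [← hx, ← hx', hxx]
    have e1 := e (count S T m).toNat
    have e2 := e (count S' T' m).toNat
    omega
  have hd : ∀ m, dev S T m = dev S' T' m := fun m => by
    have h1 := count_succ S T (m - 1)
    have h2 := count_succ S' T' (m - 1)
    rw [hc, hc, sub_add_cancel] at h1
    rw [sub_add_cancel] at h2
    split_ifs at h1 h2 <;> omega
  have key : ∀ m, (m ∈ S ↔ m ∈ S') ∧ (m ∈ T ↔ m ∈ T') := fun m => by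
    have h1 := hd m
    have h2 := @hT m
    have h3 := @hT' m
    unfold dev at h1
    by_cases a : m ∈ S <;> by_cases b : m ∈ T <;> by_cases c : m ∈ S' <;> by_cases d : m ∈ T' <;>
      simp_all
  exact ⟨Finset.ext fun m => (key m).1, Finset.ext fun m => (key m).2⟩

lemma Rel.right_unique {S T : Finset ℤ} {l l' : ℤ} {ω ω' : ℕ → ℕ}
    (h : Rel S T l ω) (h' : Rel S T l' ω') : l = l' ∧ ω = ω' := by
  have hl : l = l' := by have := h.charge; have := h'.charge; omega
  refine ⟨hl, ?_⟩
  obtain ⟨x, hs, -, hx⟩ := h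
  obtain ⟨x', hs', -, hx'⟩ := h'
  have hxx : ∀ k, x k = x' k := fun k =>
    le_antisymm (((hx k _).2 ((hx' k _).1 le_rfl))) (((hx' k _).2 ((hx k _).1 le_rfl)))
  funext k
  have h1 := hs k
  have h2 := hs' k
  rw [hxx, hxx] at h1
  omega

/-! ### The energy of a state -/

/-- Counted up to site `m`, the energy is that of the ground state minus the sum of the particle
positions, since `sgn i * dev i` is the ground-state occupation of `i` minus the actual one. -/
lemma part_energy {S T : Finset ℤ} {x : ℕ → ℤ} (hx : ∀ k m, x k ≤ m ↔ (k : ℤ) < count S T m) :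
    ∀ m, part S T (fun i => sgn i * (i + 1)) m =
      max (m + 1) 0 * (max (m + 1) 0 + 1) - ∑ k ∈ range (count S T m).toNat, (x k + 1) := by
  obtain ⟨L, hL, -⟩ := exists_part_bound S T
  obtain ⟨L', hL', -⟩ := exists_count_bound S T
  refine eq_of_succ (-(L + L' + 1 : ℤ)) (fun m hm => ?_) (fun m hm => ?_)
  · rw [hL _ _ (by omega), hL' _ (by omega), max_eq_right (by omega)]; simp
  · have hn := count_nonneg S T m
    have hst := count_step S T m
    -- the particles newly counted at `m + 1` all sit at that site
    have hsum : ∑ k ∈ range (count S T (m + 1)).toNat, (x k + 1) =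
        ∑ k ∈ range (count S T m).toNat, (x k + 1)
          + (count S T (m + 1) - count S T m) * (m + 2) := by
      rw [← Finset.sum_range_add_sum_Ico _
        (show (count S T m).toNat ≤ (count S T (m + 1)).toNat by omega)]
      congr 1
      rw [Finset.sum_congr rfl (g := fun _ => m + 2)]
      · rw [Finset.sum_const, Nat.card_Ico, nsmul_eq_mul]
        congr 1; omega
      · intro k hk
        rw [Finset.mem_Ico] at hk
        have h1 := (hx k (m + 1)).2 (by omega)
        have h2 := mt (hx k m).1 (by omega)
        omega
    rw [part_succ, hm, hsum, count_succ, sgn]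
    split_ifs with h
    · rw [max_eq_left (by omega), max_eq_left (by omega)]; ring
    · rw [max_eq_right (by omega), max_eq_right (by omega)]; ring

/-- The ground-state gaps `1{n odd}` are written as `n % 2`, so that both cases of `Afun` agree. -/
lemma Afun_eq {ω : ℕ → ℕ} {N : ℕ} (hN : ∀ n ≥ N, ω n = if (n + 1) % 2 = 0 then 1 else 0) :
    Afun ω = ∑ n ∈ range N, ((n : ℤ) + 1) * ((ω n : ℤ) - (n % 2 : ℕ)) := by
  have hsame : ∀ n : ℕ, (if (n + 1) % 2 = 1 then ((n : ℤ) + 1) * (ω n : ℤ)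
      else ((n : ℤ) + 1) * ((ω n : ℤ) - 1)) = ((n : ℤ) + 1) * ((ω n : ℤ) - (n % 2 : ℕ)) := by
    intro n
    rcases Nat.mod_two_eq_zero_or_one n with h | h
    · rw [if_pos (by omega), h]; simp
    · rw [if_neg (by omega), h]; simp
  unfold Afun
  simp_rw [hsame]
  refine finsum_eq_sum_of_support_subset _ fun n hn => ?_
  by_contra hlt
  apply hn
  have hnN : N ≤ n := by simpa using hlt
  simp only [hN n hnN]
  split_ifs with h
  · rw [show n % 2 = 1 by omega]; simp
  · rw [show n % 2 = 0 by omega]; simp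

lemma sum_ground (n : ℕ) :
    ∑ k ∈ range (2 * n), ((k : ℤ) + 1) * ((k % 2 : ℕ) : ℤ) = n * (n + 1) := by
  induction n with
  | zero => simp
  | succ n ih =>
    rw [show 2 * (n + 1) = 2 * n + 1 + 1 by ring, Finset.sum_range_succ, Finset.sum_range_succ, ih,
      show (2 * n) % 2 = 0 by omega, show (2 * n + 1) % 2 = 1 by omega]
    push_cast; ring

lemma sum_abel (x : ℕ → ℤ) (n : ℕ) :
    ∑ k ∈ range n, ((k : ℤ) + 1) * (x (k + 1) - x k) = n * x n - ∑ k ∈ range n, x k := by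
  induction n with
  | zero => simp
  | succ n ih => rw [Finset.sum_range_succ, Finset.sum_range_succ, ih]; push_cast; ring

/-- The energy of a state equals `l (l + 1) + A(ω)`: summation by parts expresses `A(ω)` through
the sum of the positions of the first `2 n` particles, for `n` large. -/
lemma Rel.energy {S T : Finset ℤ} {l : ℤ} {ω : ℕ → ℕ} (hω : ω ∈ He) (h : Rel S T l ω) :
    ∑ i ∈ S, sgn i * (i + 1) + ∑ i ∈ T, sgn i * (i + 1) = l * (l + 1) + Afun ω := by
  have hch := h.charge
  obtain ⟨x, hs, ⟨N, hN⟩, hx⟩ := h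
  obtain ⟨-, N', hN'⟩ := hω
  obtain ⟨L, -, hL⟩ := exists_count_bound S T
  obtain ⟨L', -, hL'⟩ := exists_part_bound S T
  have a1 := le_abs_self l
  have a2 := neg_abs_le l
  obtain ⟨n, hn⟩ : ∃ n : ℕ, (n : ℤ) = N + N' + L + L' + |l| + 1 :=
    ⟨N + N' + L + L' + l.natAbs + 1, by
    push_cast; omega⟩
  have hc := hL (n + l - 1) (by omega)
  have hE := part_energy hx (n + l - 1)
  rw [hL' _ _ (by omega), hc, hch, max_eq_left (by omega),
    show (2 * ((n : ℤ) + l - 1 + 1) - 2 * l).toNat = 2 * n by omega, Finset.sum_add_distrib] at hE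
  have hA := Afun_eq (N := 2 * n) fun k hk => hN' k (by omega)
  simp_rw [mul_sub] at hA
  rw [Finset.sum_sub_distrib, sum_ground] at hA
  have hab := sum_abel x (2 * n)
  simp_rw [hs, add_sub_cancel_left] at hab
  rw [hab, hN (2 * n) (by omega), show 2 * n / 2 = n by omega] at hA
  simp only [Finset.sum_const, Finset.card_range, nsmul_eq_mul, mul_one] at hE
  push_cast at hA hE
  rw [hE, hA]; ring

/-! ### Expanding the infinite products over states -/

/-- A state, encoded by the finite set `S` of sites that deviate from the ground state and the
subset `T ⊆ S` of sites that deviate twice. The ground state has two particles at each site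
`i ≥ 0` and none at the sites `i < 0`. -/
abbrev State : Type := Σ S : Finset ℤ, {T : Finset ℤ // T ∈ S.powerset}

/-- The product of the weights `w i` over all deviations, those in `T` counted twice. -/
noncomputable def stateWeight (w : ℤ → ℝ) (p : State) : ℝ := (∏ i ∈ p.1, w i) * ∏ i ∈ p.2.1, w i

lemma summable_add_sq {w : ℤ → ℝ} (hw : Summable fun i => |w i|) :
    Summable fun i => ‖w i + w i ^ 2‖ := by
  have h2 : Summable fun i => |w i| + (∑' j, |w j|) * |w i| := hw.add (hw.mul_left _)
  refine h2.of_nonneg_of_le (fun _ => norm_nonneg _) fun i => ?_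
  have h3 : |w i| ≤ ∑' j, |w j| := hw.le_tsum i fun _ _ => abs_nonneg _
  calc ‖w i + w i ^ 2‖ ≤ |w i| + |w i ^ 2| := abs_add_le _ _
    _ ≤ _ := by rw [abs_pow, pow_two]; gcongr

lemma hasSum_fiber (w : ℤ → ℝ) (S : Finset ℤ) :
    HasSum (fun T : {T : Finset ℤ // T ∈ S.powerset} => stateWeight w ⟨S, T⟩)
      (∏ i ∈ S, (w i + w i ^ 2)) := by
  have h : ∏ i ∈ S, (w i + w i ^ 2) =
      ∑ T : {T : Finset ℤ // T ∈ S.powerset}, stateWeight w ⟨S, T⟩ := by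
    refine Eq.trans ?_ (Finset.sum_coe_sort S.powerset fun T =>
      (∏ i ∈ S, w i) * ∏ i ∈ T, w i).symm
    rw [← Finset.mul_sum, ← Finset.prod_one_add, ← Finset.prod_mul_distrib]
    exact Finset.prod_congr rfl fun i _ => by ring
  rw [h]
  exact hasSum_fintype _

/-- Expansion of `∏ (1 + w i + w i ^ 2)`: pick in each factor the number of deviations. -/
lemma hasSum_state {w : ℤ → ℝ} (hw : Summable fun i => |w i|) :
    HasSum (stateWeight w) (∏' i, (1 + (w i + w i ^ 2))) := by
  have hfin := summable_finsetProd_of_summable_norm (summable_add_sq hw)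
  rw [tprod_one_add hfin]
  refine HasSum.sigma_of_hasSum hfin.hasSum (hasSum_fiber w) (Summable.of_norm ?_)
  have habs : ∀ p, ‖stateWeight w p‖ = stateWeight (fun i => |w i|) p := fun p => by
    simp only [stateWeight, norm_mul, norm_prod, Real.norm_eq_abs]
  have hwabs : Summable fun i => |(|w i|)| := by simpa using hw
  simp_rw [habs]
  rw [summable_sigma_of_nonneg fun p => by rw [← habs]; exact norm_nonneg _]
  refine ⟨fun S => (hasSum_fiber _ S).summable, ?_⟩
  simp_rw [fun S => (hasSum_fiber (fun i => |w i|) S).tsum_eq]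
  exact summable_finsetProd_of_summable_norm (summable_add_sq hwabs)

/-- A product over `ℤ` folded to a product over `ℕ` by pairing `n` with `-(n + 1)`. -/
lemma hasProd_fold {g : ℤ → ℝ} (hg : Summable fun i => ‖g i‖) :
    HasProd (fun n : ℕ => (1 + g n) * (1 + g (-(n + 1)))) (∏' i, (1 + g i)) := by
  have h1 : Multipliable fun n : ℕ => 1 + g n :=
    multipliable_one_add_of_summable (hg.comp_injective Nat.cast_injective)
  have h2 : Multipliable fun n : ℕ => 1 + g (-(n + 1)) :=
    multipliable_one_add_of_summable
      (hg.comp_injective (i := fun n : ℕ => (-(n + 1) : ℤ)) fun a b h => by simpa using h)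
  rw [(HasProd.of_nat_of_neg_add_one (f := fun i => 1 + g i) h1.hasProd h2.hasProd).tprod_eq]
  exact h1.hasProd.mul h2.hasProd

/-- The weight of one deviation at site `i`. Holes at `i = n ≥ 0` contribute `q ^ (n + 1) * z` and
particles at `i = -(n + 1)` contribute `q ^ n * z⁻¹`; the exponent of `q` is `|i + 1|`. -/
noncomputable def siteWeight (q z : ℝ) (i : ℤ) : ℝ := q ^ (sgn i * (i + 1)) * z ^ sgn i

lemma siteWeight_nat (q z : ℝ) (n : ℕ) : siteWeight q z n = q ^ (n + 1) * z := by
  rw [siteWeight, sgn, if_pos (by omega), one_mul, zpow_one]; norm_cast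

lemma siteWeight_neg (q z : ℝ) (n : ℕ) : siteWeight q z (-(n + 1)) = q ^ n * z⁻¹ := by
  rw [siteWeight, sgn, if_neg (by omega), zpow_neg_one]
  congr 1
  rw [show (-1 : ℤ) * (-(n + 1) + 1) = n by ring]; norm_cast

lemma summable_siteWeight {q z : ℝ} (hq0 : 0 < q) (hq1 : q < 1) :
    Summable fun i => |siteWeight q z i| := by
  have hg := summable_geometric_of_lt_one hq0.le hq1
  refine Summable.abs (Summable.of_nat_of_neg_add_one ?_ ?_)
  · simp_rw [siteWeight_nat, pow_succ, mul_assoc]; exact hg.mul_right _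
  · simp_rw [siteWeight_neg]; exact hg.mul_right _

lemma prod_siteWeight {q z : ℝ} (hq0 : 0 < q) (hz : 0 < z) (S : Finset ℤ) :
    ∏ i ∈ S, siteWeight q z i = q ^ (∑ i ∈ S, sgn i * (i + 1)) * z ^ (∑ i ∈ S, sgn i) := by
  induction S using Finset.induction_on with
  | empty => simp
  | insert a S ha ih =>
    rw [Finset.prod_insert ha, Finset.sum_insert ha, Finset.sum_insert ha, ih,
      zpow_add₀ hq0.ne', zpow_add₀ hz.ne', siteWeight]
    ring

lemma Rel.stateWeight_eq {q z : ℝ} (hq0 : 0 < q) (hz : 0 < z) {p : State} {l : ℤ} {ω : ℕ → ℕ}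
    (hω : ω ∈ He) (h : Rel p.1 p.2.1 l ω) :
    stateWeight (siteWeight q z) p = q ^ (l * (l + 1)) * z ^ (2 * l) * q ^ Afun ω := by
  rw [stateWeight, prod_siteWeight hq0 hz, prod_siteWeight hq0 hz, ← h.charge,
    mul_right_comm _ _ (q ^ Afun ω), ← zpow_add₀ hq0.ne' (l * (l + 1)), ← h.energy hω,
    zpow_add₀ hq0.ne', zpow_add₀ hz.ne']
  ring

/-- The states of even charge (the charge has the parity of the number of deviations). -/
abbrev EvenState : Type := {p : State // p ∈ {p : State | Even (#p.1 + #p.2.1)}}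

/-- `Rel` is the graph of a bijection from the states of even charge to `ℤ × He`. -/
lemma exists_equiv : ∃ e : EvenState ≃ ℤ × He, ∀ p : EvenState,
    Rel p.1.1 p.1.2.1 (e p).1 (e p).2.1 := by
  have h : ∀ p : EvenState, ∃ y : ℤ × He, Rel p.1.1 p.1.2.1 y.1 y.2.1 := fun p => by
    obtain ⟨l, ω, hω, hr⟩ := exists_of_state p.1.1 p.1.2.1 p.2
    exact ⟨(l, ⟨ω, hω⟩), hr⟩
  choose f hf using h
  refine ⟨Equiv.ofBijective f ⟨fun p p' hpp => ?_, fun y => ?_⟩, hf⟩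
  · have h1 := hf p
    rw [hpp] at h1
    obtain ⟨⟨S, T, hT⟩, hp⟩ := p
    obtain ⟨⟨S', T', hT'⟩, hp'⟩ := p'
    obtain ⟨rfl, rfl⟩ :=
      Rel.left_unique (Finset.mem_powerset.1 hT) (Finset.mem_powerset.1 hT') h1 (hf _)
    rfl
  · obtain ⟨S, T, hT, hr⟩ := exists_of_seq y.1 y.2.2
    have he : Even (#S + #T) := by
      obtain ⟨c, hc⟩ := sum_sgn_parity S
      obtain ⟨d, hd⟩ := sum_sgn_parity T
      have := hr.charge
      rw [Nat.even_iff]; omega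
    refine ⟨⟨⟨S, T, Finset.mem_powerset.2 hT⟩, he⟩, ?_⟩
    obtain ⟨h1, h2⟩ := Rel.right_unique (hf ⟨⟨S, T, Finset.mem_powerset.2 hT⟩, he⟩) hr
    exact Prod.ext h1 (Subtype.ext h2)

lemma stateWeight_neg (w : ℤ → ℝ) (p : State) :
    stateWeight (fun i => -w i) p = (-1) ^ (#p.1 + #p.2.1) * stateWeight w p := by
  simp only [stateWeight, Finset.prod_neg, pow_add]; ring

/-- Averaging the products at `z` and `-z` keeps exactly the states of even charge, which are
then indexed by `ℤ × He`. -/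
lemma hasSum_pairs {q z : ℝ} (hq0 : 0 < q) (hq1 : q < 1) (hz : 0 < z) :
    HasSum (fun y : ℤ × He => q ^ (y.1 * (y.1 + 1)) * z ^ (2 * y.1) * q ^ Afun y.2.1)
      ((∏' i, (1 + (siteWeight q z i + siteWeight q z i ^ 2)) +
        ∏' i, (1 + (-siteWeight q z i + (-siteWeight q z i) ^ 2))) / 2) := by
  have hw := summable_siteWeight (z := z) hq0 hq1
  have h1 := hasSum_state hw
  have h2 := hasSum_state (w := fun i => -siteWeight q z i) (by simpa using hw)
  have h3 := (h1.add h2).div_const 2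
  simp_rw [stateWeight_neg] at h3
  obtain ⟨e, he⟩ := exists_equiv
  rw [← e.hasSum_iff]
  rw [← hasSum_subtype_iff_of_support_subset
    (s := {p : State | Even (#p.1 + #p.2.1)})] at h3
  · refine h3.congr_fun fun p => ?_
    have hp : Even (#p.1.1 + #p.1.2.1) := p.2
    simp only [Function.comp_apply, hp.neg_one_pow]
    rw [← (he p).stateWeight_eq hq0 hz (e p).2.2]
    ring
  · intro p hp
    by_contra hodd
    apply hp
    have : Odd (#p.1 + #p.2.1) := Nat.not_even_iff_odd.1 hodd
    simp [this.neg_one_pow]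

end TwoExclusion

theorem statement11 (q z : ℝ) (hq0 : 0 < q) (hq1 : q < 1) (hz : 0 < z) :
    Summable (fun ℓ : ℤ => q ^ (ℓ * (ℓ + 1)) * z ^ (2 * ℓ)) ∧
    Multipliable (fun i : ℕ =>
      (1 + q ^ (i + 1) * z + q ^ (2 * (i + 1)) * z ^ 2) *
      (1 + q ^ i * z⁻¹ + q ^ (2 * i) * z⁻¹ ^ 2)) ∧
    Multipliable (fun i : ℕ =>
      (1 - q ^ (i + 1) * z + q ^ (2 * (i + 1)) * z ^ 2) *
      (1 - q ^ i * z⁻¹ + q ^ (2 * i) * z⁻¹ ^ 2)) ∧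
    2 * Seven q 1 * (∑' ℓ : ℤ, q ^ (ℓ * (ℓ + 1)) * z ^ (2 * ℓ)) =
      (∏' i : ℕ, (1 + q ^ (i + 1) * z + q ^ (2 * (i + 1)) * z ^ 2) *
        (1 + q ^ i * z⁻¹ + q ^ (2 * i) * z⁻¹ ^ 2)) +
      (∏' i : ℕ, (1 - q ^ (i + 1) * z + q ^ (2 * (i + 1)) * z ^ 2) *
        (1 - q ^ i * z⁻¹ + q ^ (2 * i) * z⁻¹ ^ 2)) := by
  have hw := TwoExclusion.summable_siteWeight (z := z) hq0 hq1
  have hplus := TwoExclusion.hasProd_fold (TwoExclusion.summable_add_sq hw)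
  have hminus := TwoExclusion.hasProd_fold (TwoExclusion.summable_add_sq
    (w := fun i => -TwoExclusion.siteWeight q z i) (by simpa using hw))
  simp only [TwoExclusion.siteWeight_nat, TwoExclusion.siteWeight_neg] at hplus hminus
  have e1 : (fun n : ℕ => (1 + (q ^ (n + 1) * z + (q ^ (n + 1) * z) ^ 2)) *
      (1 + (q ^ n * z⁻¹ + (q ^ n * z⁻¹) ^ 2))) = fun i : ℕ =>
      (1 + q ^ (i + 1) * z + q ^ (2 * (i + 1)) * z ^ 2) *
      (1 + q ^ i * z⁻¹ + q ^ (2 * i) * z⁻¹ ^ 2) := by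
    funext n; simp only [pow_mul']; ring
  have e2 : (fun n : ℕ => (1 + (-(q ^ (n + 1) * z) + (-(q ^ (n + 1) * z)) ^ 2)) *
      (1 + (-(q ^ n * z⁻¹) + (-(q ^ n * z⁻¹)) ^ 2))) = fun i : ℕ =>
      (1 - q ^ (i + 1) * z + q ^ (2 * (i + 1)) * z ^ 2) *
      (1 - q ^ i * z⁻¹ + q ^ (2 * i) * z⁻¹ ^ 2) := by
    funext n; simp only [pow_mul']; ring
  rw [e1] at hplus
  rw [e2] at hminus
  have hsum := TwoExclusion.hasSum_pairs hq0 hq1 hz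
  -- restricting the double family to one fixed sequence `g` gives a non-zero multiple of the
  -- theta series
  obtain ⟨g⟩ : Nonempty He := by
    refine ⟨⟨fun n => if (n + 1) % 2 = 0 then 1 else 0, fun n h => ?_, 0, fun _ _ => rfl⟩⟩
    obtain ⟨h1, h2⟩ := h
    simp only at h1 h2
    split_ifs at h1 h2
    omega
  have htheta : Summable (fun ℓ : ℤ => q ^ (ℓ * (ℓ + 1)) * z ^ (2 * ℓ)) := by
    have h : Summable (fun ℓ : ℤ => q ^ (ℓ * (ℓ + 1)) * z ^ (2 * ℓ) * q ^ Afun g.1) := by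
      have h' := hsum.summable.comp_injective (Prod.mk_left_injective g)
      simpa only [Function.comp_def] using h'
    exact (summable_mul_right_iff (zpow_ne_zero _ hq0.ne')).1 h
  refine ⟨htheta, hplus.multipliable, hminus.multipliable, ?_⟩
  rw [hplus.tprod_eq, hminus.tprod_eq]
  have htot := hsum.summable.tsum_prod
  simp only [tsum_mul_left, tsum_mul_right] at htot
  rw [hsum.tsum_eq] at htot
  simp only [Seven, one_zpow, mul_one]
  linarith
end
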